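/- Let V ∈ 𝒞 satisfy the Osgood condition |V(t,x) − V(t,y)| ≤ C(t)ρ(|x−y|) with C ∈ L¹(0,T) and ρ Osgood, and let X be the associated flow of homeomorphisms solving the ODE. Then for every norm-bounded signed-measure solution (μ_t) ∈ C([0,T], M(ℝ^d)) of the continuity equation and all s, t ∈ [0,T], one has μ_t = (X_s^t)_♯ μ_s. -/

import Mathlib

open MeasureTheory Set
open scoped ENNReal NNReal Topology

noncomputable section

/-- A solution of the ODE `γ' = V(t,γ)` on `[0,T]`, in integral form. -/
def IsSolution {d : ℕ} (T : ℝ) (hT : 0 ≤ T)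
    (V : ℝ → EuclideanSpace ℝ (Fin d) → EuclideanSpace ℝ (Fin d))
    (γ : C(Set.Icc (0:ℝ) T, EuclideanSpace ℝ (Fin d))) : Prop :=
  ∀ t : Set.Icc (0:ℝ) T,
    γ t - γ ⟨0, Set.left_mem_Icc.mpr hT⟩ =
      ∫ s in (0:ℝ)..(t:ℝ), V s (γ (Set.projIcc 0 T hT s))

/-- `X` is a flow of solutions of the ODE. -/
def IsFlow {d : ℕ} (T : ℝ) (hT : 0 ≤ T)
    (V : ℝ → EuclideanSpace ℝ (Fin d) → EuclideanSpace ℝ (Fin d))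
    (X : ℝ → ℝ → EuclideanSpace ℝ (Fin d) → EuclideanSpace ℝ (Fin d)) : Prop :=
  ∀ (t : ℝ) (ht : t ∈ Set.Icc (0:ℝ) T) (x : EuclideanSpace ℝ (Fin d)),
    ∃ γ : C(Set.Icc (0:ℝ) T, EuclideanSpace ℝ (Fin d)),
      IsSolution T hT V γ ∧ γ ⟨t, ht⟩ = x ∧
      (∀ s : Set.Icc (0:ℝ) T, X t s x = γ s) ∧
      (∀ γ' : C(Set.Icc (0:ℝ) T, EuclideanSpace ℝ (Fin d)),
        IsSolution T hT V γ' → γ' ⟨t, ht⟩ = x → γ' = γ)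

/-- Integral of a function against a signed measure, via the Jordan
decomposition. -/
def sInt {d : ℕ} (μ : MeasureTheory.SignedMeasure (EuclideanSpace ℝ (Fin d)))
    (f : EuclideanSpace ℝ (Fin d) → ℝ) : ℝ :=
  (∫ x, f x ∂μ.toJordanDecomposition.posPart) -
    ∫ x, f x ∂μ.toJordanDecomposition.negPart

/-- A signed-measure-valued solution of the continuity equation, in weak
(integral) form. -/
def IsSignedSolution {d : ℕ} (T : ℝ)
    (V : ℝ → EuclideanSpace ℝ (Fin d) → EuclideanSpace ℝ (Fin d))
    (μ : ℝ → MeasureTheory.SignedMeasure (EuclideanSpace ℝ (Fin d))) : Prop :=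
  ∀ u : EuclideanSpace ℝ (Fin d) → ℝ, ContDiff ℝ (⊤ : ℕ∞) u → HasCompactSupport u →
    ∀ s ∈ Set.Icc (0:ℝ) T, ∀ t ∈ Set.Icc (0:ℝ) T,
      sInt (μ t) u - sInt (μ s) u =
        ∫ σ in s..t, sInt (μ σ) (fun x => fderiv ℝ u x (V σ x))

section Helpers

open Filter Metric
open scoped Convolution ContDiff

section Mollify

variable {E F G H : Type*} [NormedAddCommGroup E] [InnerProductSpace ℝ E] [FiniteDimensional ℝ E]
  [MeasurableSpace E] [BorelSpace E] [NormedAddCommGroup F] [NormedSpace ℝ F]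
  [NormedAddCommGroup G] [NormedSpace ℝ G] [NormedAddCommGroup H] [NormedSpace ℝ H]

theorem exists_norm_apply₂_le (L : G →L[ℝ] F →L[ℝ] H) :
    ∃ N : ℝ, 0 ≤ N ∧ ∀ a b, ‖L a b‖ ≤ N * ‖a‖ * ‖b‖ :=
  ⟨‖L‖, L.opNorm_nonneg, L.le_opNorm₂⟩

/-- Convolution with a Lipschitz kernel supported in the ball of radius `1/2` is locally Lipschitz,
with a constant controlled by the oscillation of the other factor. -/
theorem norm_convolution_sub_le [CompleteSpace H] {k : E → G} {K : ℝ≥0} (hk : LipschitzWith K k)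
    (hks : ∀ z, 1 / 2 < ‖z‖ → k z = 0) (L : G →L[ℝ] F →L[ℝ] H) {N : ℝ}
    (hN : 0 ≤ N) (hL : ∀ a b, ‖L a b‖ ≤ N * ‖a‖ * ‖b‖) {g : E → F}
    (hg : Continuous g) {c : F} {w : ℝ} {x y : E} (hosc : ∀ z, ‖z - x‖ ≤ 1 → ‖g z - c‖ ≤ w)
    (hxy : ‖y - x‖ ≤ 1 / 2) :
    ‖(k ⋆[L, volume] g) y - (k ⋆[L, volume] g) x‖ ≤
      N * K * w * volume.real (closedBall (0 : E) 1) * ‖y - x‖ := by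
  have hcs : HasCompactSupport k := by
    refine HasCompactSupport.of_support_subset_isCompact (isCompact_closedBall (0 : E) (1 / 2)) ?_
    intro z hz
    by_contra h
    exact hz (hks z (by simpa using h))
  have hint : ∀ (u : E) (f : E → F), Continuous f →
      Integrable (fun z => L (k (u - z)) (f z)) volume := fun u f hf =>
    ((hcs.convolutionExists_left L hk.continuous hf.locallyIntegrable) u).integrable_swap
  have hconst : ∀ u : E, ∫ z, L (k (u - z)) c = ∫ z, L (k z) c := fun u =>
    integral_sub_left_eq_self (fun z => L (k z) c) volume u
  have key : (k ⋆[L, volume] g) y - (k ⋆[L, volume] g) x =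
      ∫ z, L (k (y - z) - k (x - z)) (g z - c) := by
    rw [convolution_eq_swap, convolution_eq_swap]
    have h1 : ∀ z, L (k (y - z) - k (x - z)) (g z - c) =
        (L (k (y - z)) (g z) - L (k (x - z)) (g z)) -
          (L (k (y - z)) c - L (k (x - z)) c) := by
      intro z; simp only [map_sub, sub_apply]
    simp_rw [h1]
    have hsub : ∀ f : E → F, Continuous f →
        Integrable (fun z => L (k (y - z)) (f z) - L (k (x - z)) (f z)) volume := fun f hf =>
      (hint y f hf).sub (hint x f hf)
    rw [integral_sub (hsub g hg) (hsub _ continuous_const),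
      integral_sub (hint y g hg) (hint x g hg),
      integral_sub (hint y _ continuous_const) (hint x _ continuous_const), hconst, hconst]
    simp
  have hsupp : ∀ z, z ∉ closedBall x 1 → L (k (y - z) - k (x - z)) (g z - c) = 0 := by
    intro z hz
    have hz' : 1 < ‖x - z‖ := by simpa [dist_eq_norm, norm_sub_rev] using hz
    have h2 : 1 / 2 < ‖y - z‖ := by
      have := norm_sub_norm_le (x - z) (x - y)
      rw [sub_sub_sub_cancel_left] at this
      rw [norm_sub_rev x y] at this
      linarith
    rw [hks _ h2, hks _ (by linarith)]
    simp
  rw [key, ← setIntegral_eq_integral_of_forall_compl_eq_zero hsupp]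
  have hvol : volume.real (closedBall x 1) = volume.real (closedBall (0 : E) 1) := by
    simp only [measureReal_def, Measure.addHaar_closedBall_center]
  calc _ ≤ (N * (K * ‖y - x‖) * w) * volume.real (closedBall x 1) := by
        refine norm_setIntegral_le_of_norm_le_const measure_closedBall_lt_top fun z hz => ?_
        refine (hL _ _).trans ?_
        have h3 : ‖k (y - z) - k (x - z)‖ ≤ K * ‖y - x‖ := by
          have := hk.dist_le_mul (y - z) (x - z)
          simpa [dist_eq_norm] using this
        have h4 : ‖g z - c‖ ≤ w := hosc z (by simpa [dist_eq_norm] using hz)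
        gcongr
    _ = _ := by rw [hvol]; ring

variable (E) in
/-- The bump function used for mollification. -/
def mollBump : ContDiffBump (0 : E) := ⟨1 / 4, 1 / 2, by norm_num, by norm_num⟩

variable (E) in
/-- The unit-scale mollification kernel. -/
def mollKernel : E → ℝ := (mollBump E).normed volume

theorem contDiff_mollKernel : ContDiff ℝ ∞ (mollKernel E) := (mollBump E).contDiff_normed

theorem hasCompactSupport_mollKernel : HasCompactSupport (mollKernel E) :=
  (mollBump E).hasCompactSupport_normed

theorem mollKernel_eq_zero {z : E} (hz : 1 / 2 ≤ ‖z‖) : mollKernel E z = 0 := by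
  by_contra h
  have : z ∈ Function.support (mollKernel E) := h
  rw [mollKernel, ContDiffBump.support_normed_eq] at this
  have h1 : ‖z‖ < 1 / 2 := by simpa [mollBump] using this
  linarith

theorem fderiv_mollKernel_eq_zero {z : E} (hz : 1 / 2 < ‖z‖) : fderiv ℝ (mollKernel E) z = 0 := by
  have : mollKernel E =ᶠ[𝓝 z] fun _ => 0 := by
    filter_upwards [continuous_norm.continuousAt.eventually (lt_mem_nhds hz)] with y hy
    exact mollKernel_eq_zero hy.le
  rw [this.fderiv_eq]
  simp

/-- Mollification of `f` at scale `δ`. -/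
def mollify (δ : ℝ) (f : E → F) : E → F := fun x =>
  (mollKernel E ⋆[ContinuousLinearMap.lsmul ℝ ℝ, volume] fun z => f (δ • z)) (δ⁻¹ • x)

theorem contDiff_mollify [CompleteSpace F] (δ : ℝ) {f : E → F} (hf : Continuous f) :
    ContDiff ℝ ∞ (mollify δ f) := by
  have hloc : LocallyIntegrable (fun z : E => f (δ • z)) volume :=
    Continuous.locallyIntegrable (by fun_prop)
  exact (hasCompactSupport_mollKernel.contDiff_convolution_left _ contDiff_mollKernel hloc).comp
    (contDiff_const_smul _)

theorem norm_mollify_sub_le [CompleteSpace F] {δ : ℝ} (hδ : 0 < δ) {f : E → F} (hf : Continuous f)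
    {x : E} {w : ℝ} (hosc : ∀ y, ‖y - x‖ ≤ δ → ‖f y - f x‖ ≤ w) : ‖mollify δ f x - f x‖ ≤ w := by
  have hx : δ • δ⁻¹ • x = x := smul_inv_smul₀ hδ.ne' x
  have := (mollBump E).dist_normed_convolution_le (μ := volume) (g := fun z => f (δ • z))
    (x₀ := δ⁻¹ • x) (ε := w)
    (Continuous.aestronglyMeasurable (by fun_prop)) (fun z hz => by
      rw [dist_eq_norm, hx]
      refine hosc _ ?_
      have h1 : δ • z - x = δ • (z - δ⁻¹ • x) := by rw [smul_sub, hx]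
      have h2 : ‖z - δ⁻¹ • x‖ < 1 / 2 := by simpa [dist_eq_norm, mollBump] using hz
      rw [h1, norm_smul, Real.norm_of_nonneg hδ.le]
      nlinarith)
  rwa [dist_eq_norm, hx] at this

theorem norm_mollify_le [CompleteSpace F] {δ : ℝ} (hδ : 0 < δ) {f : E → F} (hf : Continuous f)
    {m : ℝ} (hm : ∀ y, ‖f y‖ ≤ m) (x : E) : ‖mollify δ f x‖ ≤ 3 * m := by
  have h := norm_mollify_sub_le hδ hf (x := x) (w := m + m)
    fun y _ => (norm_sub_le _ _).trans (add_le_add (hm y) (hm x))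
  have := norm_add_le (mollify δ f x - f x) (f x)
  rw [sub_add_cancel] at this
  linarith [hm x]

/-- A constant, depending only on the space, controlling first derivatives of mollifications. -/
theorem exists_norm_fderiv_mollify_le (E F : Type*) [NormedAddCommGroup E] [InnerProductSpace ℝ E]
    [FiniteDimensional ℝ E] [MeasurableSpace E] [BorelSpace E] [NormedAddCommGroup F]
    [NormedSpace ℝ F] [CompleteSpace F] : ∃ κ : ℝ, 0 < κ ∧
    ∀ (δ : ℝ), 0 < δ → ∀ f : E → F, Continuous f → ∀ (x : E) (w : ℝ),
      (∀ y, ‖y - x‖ ≤ δ → ‖f y - f x‖ ≤ w) → ‖fderiv ℝ (mollify δ f) x‖ ≤ κ * w / δ := by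
  obtain ⟨K, hK⟩ := ContDiff.lipschitzWith_of_hasCompactSupport
    (hasCompactSupport_mollKernel (E := E)) contDiff_mollKernel (by simp)
  let L : ℝ →L[ℝ] F →L[ℝ] F := ContinuousLinearMap.lsmul ℝ ℝ
  obtain ⟨N, hN0, hN⟩ := exists_norm_apply₂_le L
  let κ₀ := N * K * volume.real (closedBall (0 : E) 1)
  have hκ₀ : 0 ≤ κ₀ := by positivity
  refine ⟨κ₀ + 1, by positivity, fun δ hδ f hf x w hosc => ?_⟩
  have hosc0 : 0 ≤ w := (norm_nonneg _).trans (hosc x (by simpa using hδ.le))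
  have hx : δ • δ⁻¹ • x = x := smul_inv_smul₀ hδ.ne' x
  refine norm_fderiv_le_of_lip' ℝ (by positivity) ?_
  filter_upwards [closedBall_mem_nhds x (half_pos hδ)] with y hy
  have hy' : ‖y - x‖ ≤ δ / 2 := by simpa [dist_eq_norm] using hy
  have hsc : ‖δ⁻¹ • y - δ⁻¹ • x‖ = ‖y - x‖ / δ := by
    rw [← smul_sub, norm_smul, norm_inv, Real.norm_of_nonneg hδ.le]; ring
  have := norm_convolution_sub_le (c := f x) (w := w) (x := δ⁻¹ • x) (y := δ⁻¹ • y)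
    hK (fun z hz => mollKernel_eq_zero hz.le) L hN0 hN (g := fun z => f (δ • z)) (by fun_prop)
    (fun z hz => by
      refine hosc _ ?_
      have h1 : δ • z - x = δ • (z - δ⁻¹ • x) := by rw [smul_sub, hx]
      rw [h1, norm_smul, Real.norm_of_nonneg hδ.le]
      nlinarith)
    (by rw [hsc, div_le_iff₀ hδ]; linarith)
  refine this.trans ?_
  rw [hsc]
  have : N * K * w * volume.real (closedBall (0 : E) 1) * (‖y - x‖ / δ) =
    κ₀ * (w * ‖y - x‖ / δ) := by simp only [κ₀]; ring
  rw [this]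
  have h5 : (κ₀ + 1) * w / δ * ‖y - x‖ = (κ₀ + 1) * (w * ‖y - x‖ / δ) := by ring
  rw [h5]
  gcongr
  linarith

/-- The derivative of the mollification of a bounded function is Lipschitz, with a constant
depending only on the space, the scale and (linearly) the bound. -/
theorem exists_norm_fderiv_mollify_sub_le (E F : Type*) [NormedAddCommGroup E]
    [InnerProductSpace ℝ E] [FiniteDimensional ℝ E] [MeasurableSpace E] [BorelSpace E]
    [NormedAddCommGroup F] [NormedSpace ℝ F] [CompleteSpace F] {δ : ℝ} (hδ : 0 < δ) :
    ∃ b : ℝ, 0 ≤ b ∧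
    ∀ f : E → F, Continuous f → ∀ m : ℝ, (∀ y, ‖f y‖ ≤ m) → ∀ x y,
      ‖fderiv ℝ (mollify δ f) x - fderiv ℝ (mollify δ f) y‖ ≤ b * m * ‖x - y‖ := by
  obtain ⟨K, hK⟩ := ContDiff.lipschitzWith_of_hasCompactSupport
    ((hasCompactSupport_mollKernel (E := E)).fderiv (𝕜 := ℝ))
    (contDiff_mollKernel.fderiv_right (m := 1) (by norm_cast)) (by simp)
  let L : ℝ →L[ℝ] F →L[ℝ] F := ContinuousLinearMap.lsmul ℝ ℝ
  obtain ⟨N, hN0, hN⟩ := exists_norm_apply₂_le (L.precompL E)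
  let κ₀ := N * K * volume.real (closedBall (0 : E) 1)
  have hκ₀ : 0 ≤ κ₀ := by positivity
  refine ⟨κ₀ / δ ^ 2, by positivity, fun f hf m hm => ?_⟩
  have hm0 : 0 ≤ m := (norm_nonneg _).trans (hm 0)
  have hfc : Continuous fun z : E => f (δ • z) := by fun_prop
  have hderiv : ∀ x, fderiv ℝ (mollify δ f) x =
      δ⁻¹ • (fderiv ℝ (mollKernel E) ⋆[L.precompL E, volume] fun z => f (δ • z)) (δ⁻¹ • x) := by
    intro x
    have h1 := hasCompactSupport_mollKernel.hasFDerivAt_convolution_left L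
      (contDiff_mollKernel (E := E).of_le (by norm_cast)) hfc.locallyIntegrable (μ := volume)
      (δ⁻¹ • x)
    have h2 : HasFDerivAt (fun y : E => δ⁻¹ • y) (δ⁻¹ • ContinuousLinearMap.id ℝ E) x :=
      (hasFDerivAt_id x).const_smul δ⁻¹
    have h3 := (h1.comp x h2).fderiv
    refine Eq.trans h3 ?_
    ext v
    simp
  have hlip : ∀ x ∈ (univ : Set E), ‖fderiv ℝ (fderiv ℝ (mollify δ f)) x‖ ≤ κ₀ / δ ^ 2 * m := by
    intro x _
    refine norm_fderiv_le_of_lip' ℝ (by positivity) ?_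
    filter_upwards [closedBall_mem_nhds x (half_pos hδ)] with y hy
    have hy' : ‖y - x‖ ≤ δ / 2 := by simpa [dist_eq_norm] using hy
    have hsc : ‖δ⁻¹ • y - δ⁻¹ • x‖ = ‖y - x‖ / δ := by
      rw [← smul_sub, norm_smul, norm_inv, Real.norm_of_nonneg hδ.le]; ring
    have := norm_convolution_sub_le (c := 0) (w := m) (x := δ⁻¹ • x) (y := δ⁻¹ • y)
      hK (fun z hz => fderiv_mollKernel_eq_zero hz) (L.precompL E) hN0 hN hfc
      (fun z hz => by simpa using hm _)
      (by rw [hsc, div_le_iff₀ hδ]; linarith)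
    rw [hderiv, hderiv, ← smul_sub, norm_smul, norm_inv, Real.norm_of_nonneg hδ.le]
    calc _ ≤ δ⁻¹ * (N * K * m * volume.real (closedBall (0 : E) 1) *
          ‖δ⁻¹ • y - δ⁻¹ • x‖) := by gcongr
      _ = _ := by rw [hsc]; simp only [κ₀]; field_simp
  intro x y
  refine Convex.norm_image_sub_le_of_norm_fderiv_le (𝕜 := ℝ) (fun z _ => ?_) hlip convex_univ
    (mem_univ y) (mem_univ x)
  exact ((contDiff_mollify δ hf).fderiv_right (m := 1) (by norm_cast)).differentiable
    (by simp) z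

end Mollify

section SignedIntegral

variable {d : ℕ}

local notation "𝔼" => EuclideanSpace ℝ (Fin d)

theorem integrable_totalVariation_of_hasCompactSupport (μ : SignedMeasure 𝔼) {f : 𝔼 → ℝ}
    (hf : Continuous f) (hc : HasCompactSupport f) : Integrable f μ.totalVariation :=
  hf.integrable_of_hasCompactSupport hc

theorem sInt_sub (μ : SignedMeasure 𝔼) {f g : 𝔼 → ℝ} (hf : Integrable f μ.totalVariation)
    (hg : Integrable g μ.totalVariation) :
    sInt μ (fun x => f x - g x) = sInt μ f - sInt μ g := by
  have hf1 := hf.left_of_add_measure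
  have hf2 := hf.right_of_add_measure
  have hg1 := hg.left_of_add_measure
  have hg2 := hg.right_of_add_measure
  rw [sInt, integral_sub hf1 hg1, integral_sub hf2 hg2, sInt, sInt]
  ring

theorem abs_sInt_le (μ : SignedMeasure 𝔼) {f : 𝔼 → ℝ} {c : ℝ} (hf : ∀ x, |f x| ≤ c) :
    |sInt μ f| ≤ μ.totalVariation.real univ * c := by
  have h1 := norm_integral_le_of_norm_le_const (μ := μ.toJordanDecomposition.posPart)
    (f := f) (Eventually.of_forall hf)
  have h2 := norm_integral_le_of_norm_le_const (μ := μ.toJordanDecomposition.negPart)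
    (f := f) (Eventually.of_forall hf)
  rw [SignedMeasure.totalVariation, measureReal_add_apply]
  have h3 := abs_sub (∫ x, f x ∂μ.toJordanDecomposition.posPart)
    (∫ x, f x ∂μ.toJordanDecomposition.negPart)
  rw [sInt]
  simp only [Real.norm_eq_abs] at h1 h2
  linarith

theorem abs_sInt_sub_le {μ : SignedMeasure 𝔼} {M : ℝ} (hM : μ.totalVariation.real univ ≤ M)
    {f g : 𝔼 → ℝ} (hf : Integrable f μ.totalVariation) (hg : Integrable g μ.totalVariation)
    {c : ℝ} (hfg : ∀ x, |f x - g x| ≤ c) : |sInt μ f - sInt μ g| ≤ M * c := by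
  rw [← sInt_sub μ hf hg]
  have hc : 0 ≤ c := (abs_nonneg _).trans (hfg 0)
  exact (abs_sInt_le μ hfg).trans (by gcongr)

/-- The smooth approximations of a compactly supported continuous function. -/
theorem exists_contDiff_hasCompactSupport_approx {f : 𝔼 → ℝ} (hf : Continuous f)
    (hc : HasCompactSupport f) {ε : ℝ} (hε : 0 < ε) :
    ∃ g : 𝔼 → ℝ, ContDiff ℝ ∞ g ∧ HasCompactSupport g ∧ ∀ x, |g x - f x| ≤ ε := by
  obtain ⟨δ, hδ, hδf⟩ := Metric.uniformContinuous_iff.mp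
    (hc.uniformContinuous_of_continuous hf) ε hε
  obtain ⟨g, hg, hgf⟩ := hf.exists_contDiff_dist_le_of_forall_mem_ball_dist_le (half_pos hδ)
  refine ⟨g, hg, ?_, fun x => hgf x ε fun y hy => (hδf (by
    have := mem_ball.1 hy; linarith)).le⟩
  refine HasCompactSupport.of_support_subset_isCompact (hc.isCompact.cthickening (r := δ)) ?_
  intro x hx
  by_contra hxt
  apply hx
  have hnot : ∀ y, dist x y ≤ δ → f y = 0 := by
    intro y hy
    by_contra h
    exact hxt (mem_cthickening_of_dist_le x y δ _ (subset_tsupport f h) hy)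
  have h0 : f x = 0 := hnot x (by simpa using hδ.le)
  have := hgf x 0 (fun y hy => by
    have := mem_ball.1 hy
    rw [h0, hnot y (by rw [dist_comm]; linarith)]; simp)
  rw [h0] at this
  simpa using this

/-- Finite measures are determined by the integrals of smooth compactly supported functions. -/
theorem measure_eq_of_forall_integral_contDiff_eq {p q : Measure 𝔼} [IsFiniteMeasure p]
    [IsFiniteMeasure q] (h : ∀ u : 𝔼 → ℝ, ContDiff ℝ ∞ u → HasCompactSupport u →
      ∫ x, u x ∂p = ∫ x, u x ∂q) : p = q := by
  refine Measure.ext_of_integral_eq_on_compactlySupported fun f => ?_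
  have hfc : Continuous f := f.continuous
  have hfs : HasCompactSupport f := f.hasCompactSupport
  have key : ∀ ε : ℝ, 0 < ε → |∫ x, f x ∂p - ∫ x, f x ∂q| ≤
      (p.real univ + q.real univ) * ε := by
    intro ε hε
    obtain ⟨g, hg, hgs, hgf⟩ := exists_contDiff_hasCompactSupport_approx hfc hfs hε
    have hb : ∀ (r : Measure 𝔼) [IsFiniteMeasure r],
        |∫ x, g x ∂r - ∫ x, f x ∂r| ≤ ε * r.real univ := by
      intro r _
      rw [← integral_sub (hg.continuous.integrable_of_hasCompactSupport hgs)
        (hfc.integrable_of_hasCompactSupport hfs)]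
      exact norm_integral_le_of_norm_le_const (f := fun x => g x - f x) (Eventually.of_forall hgf)
    have h1 := abs_le.1 (hb p)
    have h2 := abs_le.1 (hb q)
    have h3 := h g hg hgs
    rw [abs_le]
    constructor <;> nlinarith
  have h0 : |∫ x, f x ∂p - ∫ x, f x ∂q| ≤ 0 := by
    refine ge_of_tendsto (x := 𝓝[>] (0 : ℝ)) (f := fun ε => (p.real univ + q.real univ) * ε)
      ?_ ?_
    · have : Continuous fun ε : ℝ => (p.real univ + q.real univ) * ε := by fun_prop
      simpa using (this.tendsto 0).mono_left nhdsWithin_le_nhds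
    · filter_upwards [self_mem_nhdsWithin] with ε hε using key ε hε
  exact sub_eq_zero.1 (abs_nonpos_iff.1 h0)

/-- A signed measure is the pushforward of another one as soon as this holds weakly. -/
theorem signedMeasure_eq_map_of_forall_sInt_eq {μ ν : SignedMeasure 𝔼} {Y : 𝔼 → 𝔼}
    (hY : Measurable Y) (h : ∀ u : 𝔼 → ℝ, ContDiff ℝ ∞ u → HasCompactSupport u →
      sInt μ u = sInt ν (fun x => u (Y x))) : μ = ν.map Y := by
  have hm : μ.toJordanDecomposition.posPart + (ν.toJordanDecomposition.negPart).map Y =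
      μ.toJordanDecomposition.negPart + (ν.toJordanDecomposition.posPart).map Y := by
    refine measure_eq_of_forall_integral_contDiff_eq fun u hu hus => ?_
    have hi : ∀ (r : Measure 𝔼) [IsFiniteMeasure r], Integrable u r := fun r _ =>
      hu.continuous.integrable_of_hasCompactSupport hus
    rw [integral_add_measure (hi _) (hi _), integral_add_measure (hi _) (hi _),
      integral_map hY.aemeasurable hu.continuous.aestronglyMeasurable,
      integral_map hY.aemeasurable hu.continuous.aestronglyMeasurable]
    have := h u hu hus
    rw [sInt, sInt] at this
    linarith
  ext A hA
  rw [VectorMeasure.map_apply _ hY hA, SignedMeasure.apply_eq_posPart_real_sub_negPart_real _ hA,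
    SignedMeasure.apply_eq_posPart_real_sub_negPart_real _ (hY hA)]
  have : (μ.toJordanDecomposition.posPart + (ν.toJordanDecomposition.negPart).map Y).real A =
      (μ.toJordanDecomposition.negPart + (ν.toJordanDecomposition.posPart).map Y).real A := by
    rw [hm]
  rw [measureReal_add_apply, measureReal_add_apply, map_measureReal_apply hY hA,
    map_measureReal_apply hY hA] at this
  linarith

/-- A family of continuous maps is Borel measurable if it is pointwise measurable. -/
theorem measurable_continuousMap_of_eval {α : Type*} [MeasurableSpace α]
    {v : α → C(𝔼, 𝔼)} (hv : ∀ x, Measurable fun a => v a x) :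
    @Measurable _ _ _ (borel C(𝔼, 𝔼)) v := by
  rw [borel_eq_generateFrom_of_subbasis (ContinuousMap.compactOpen_eq (X := 𝔼) (Y := 𝔼))]
  refine measurable_generateFrom ?_
  rintro _ ⟨K, hK, U, hU, rfl⟩
  have hU' : IsOpen U := hU
  have hK' : IsCompact K := hK
  let F : ℕ → Set 𝔼 := fun n => ⋂ z ∈ Uᶜ, {y | 1 / ((n : ℝ) + 1) ≤ dist y z}
  have hFc : ∀ n, IsClosed (F n) := fun n => isClosed_biInter fun z _ =>
    isClosed_le continuous_const (by fun_prop)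
  have hF : ∀ n y, y ∈ F n ↔ ∀ z, z ∉ U → 1 / ((n : ℝ) + 1) ≤ dist y z := by
    intro n y
    simp only [F, mem_iInter, mem_compl_iff]
    rfl
  obtain ⟨D, hDK, hDc, hD⟩ :=
    (TopologicalSpace.IsSeparable.of_separableSpace K).exists_countable_dense_subset
  have hset : v ⁻¹' {f : C(𝔼, 𝔼) | MapsTo f K U} = ⋃ n, ⋂ x ∈ D, (fun a => v a x) ⁻¹' F n := by
    ext a
    simp only [mem_iUnion, mem_iInter, mem_preimage]
    constructor
    · intro h
      have h' : MapsTo (v a) K U := h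
      obtain ⟨r, hr, hrU⟩ := (hK'.image (v a).continuous).exists_thickening_subset_open hU'
        h'.image_subset
      obtain ⟨n, hn⟩ := exists_nat_one_div_lt hr
      refine ⟨n, fun x hx => (hF n _).2 fun z hz => ?_⟩
      by_contra hlt
      push Not at hlt
      refine hz (hrU (mem_thickening_iff.2 ⟨v a x, mem_image_of_mem _ (hDK hx), ?_⟩))
      rw [dist_comm]
      linarith
    · rintro ⟨n, hn⟩
      show MapsTo (v a) K U
      intro x hx
      have hcl : IsClosed (v a ⁻¹' F n) := (hFc n).preimage (v a).continuous
      have h1 : v a x ∈ F n := closure_minimal (fun y hy => hn y hy) hcl (hD hx)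
      by_contra hxU
      have := (hF n _).1 h1 _ hxU
      rw [dist_self] at this
      exact absurd this (not_le.2 (by positivity))
  rw [hset]
  exact .iUnion fun n => .biInter hDc fun x _ => hv x (hFc n).measurableSet

end SignedIntegral

section Solutions

variable {d : ℕ}

local notation "𝔼" => EuclideanSpace ℝ (Fin d)

theorem measurable_sInt_of_hasCompactSupport {μ : ℝ → SignedMeasure 𝔼} {M : ℝ}
    (hμ : ∀ u : 𝔼 → ℝ, ContDiff ℝ ∞ u → HasCompactSupport u → Measurable fun σ => sInt (μ σ) u)
    (hM : ∀ σ, (μ σ).totalVariation.real univ ≤ M) {f : 𝔼 → ℝ} (hf : Continuous f)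
    (hc : HasCompactSupport f) : Measurable fun σ => sInt (μ σ) f := by
  choose g hg hgs hgf using fun n : ℕ =>
    exists_contDiff_hasCompactSupport_approx hf hc (Nat.one_div_pos_of_nat (α := ℝ) (n := n))
  refine measurable_of_tendsto_metrizable (f := fun n σ => sInt (μ σ) (g n))
    (fun n => hμ (g n) (hg n) (hgs n)) (tendsto_pi_nhds.2 fun σ => ?_)
  rw [tendsto_iff_dist_tendsto_zero]
  refine squeeze_zero (fun _ => dist_nonneg) (fun n => abs_sInt_sub_le (hM σ)
    (integrable_totalVariation_of_hasCompactSupport _ (hg n).continuous (hgs n))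
    (integrable_totalVariation_of_hasCompactSupport _ hf hc) (hgf n)) ?_
  simpa using (tendsto_one_div_add_atTop_nhds_zero_nat (𝕜 := ℝ)).const_mul M

theorem HasCompactSupport.clm_apply_left {ψ : 𝔼 → 𝔼 →L[ℝ] ℝ} (hψ : HasCompactSupport ψ)
    (v : 𝔼 → 𝔼) : HasCompactSupport fun x => ψ x (v x) :=
  hψ.mono fun x hx h => hx (by simp [h])

theorem continuous_integral_clm_apply {ψ : 𝔼 → 𝔼 →L[ℝ] ℝ} (hψ : Continuous ψ)
    (hψc : HasCompactSupport ψ) (p : Measure 𝔼) [IsFiniteMeasure p] :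
    Continuous fun v : C(𝔼, 𝔼) => ∫ x, ψ x (v x) ∂p := by
  rw [continuous_iff_continuousAt]
  intro v₀
  refine tendsto_integral_filter_of_dominated_convergence (fun x => ‖ψ x‖ * (‖v₀ x‖ + 1))
    (Eventually.of_forall fun v => ?_) ?_ ?_ ?_
  · exact (hψ.clm_apply v.continuous).aestronglyMeasurable
  · have h := Metric.tendstoUniformlyOn_iff.1
      (ContinuousMap.tendsto_iff_forall_isCompact_tendstoUniformlyOn.1
        (tendsto_id (x := 𝓝 v₀)) _ hψc.isCompact) 1 one_pos
    filter_upwards [h] with v hv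
    refine Eventually.of_forall fun x => ?_
    by_cases hx : x ∈ tsupport ψ
    · refine ((ψ x).le_opNorm _).trans ?_
      have h1 := hv x hx
      have h2 : ‖v x‖ ≤ ‖v₀ x‖ + 1 := by
        have h3 := norm_sub_norm_le (v x) (v₀ x)
        rw [dist_comm, dist_eq_norm] at h1
        simp only [id] at h1
        linarith
      gcongr
    · rw [image_eq_zero_of_notMem_tsupport hx]
      simp
  · refine Continuous.integrable_of_hasCompactSupport (by fun_prop) ?_
    exact hψc.mono fun x hx h => hx (by simp [h])
  · refine Eventually.of_forall fun x => ?_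
    exact ((ψ x).continuous.comp (continuous_eval_const x)).continuousAt

theorem measurable_uncurry_sInt_clm_apply {μ : ℝ → SignedMeasure 𝔼} {M : ℝ}
    (hμ : ∀ u : 𝔼 → ℝ, ContDiff ℝ ∞ u → HasCompactSupport u → Measurable fun σ => sInt (μ σ) u)
    (hM : ∀ σ, (μ σ).totalVariation.real univ ≤ M) {ψ : 𝔼 → 𝔼 →L[ℝ] ℝ} (hψ : Continuous ψ)
    (hψc : HasCompactSupport ψ) [MeasurableSpace C(𝔼, 𝔼)] [BorelSpace C(𝔼, 𝔼)] :
    Measurable (Function.uncurry fun (w : C(𝔼, 𝔼)) (σ : ℝ) => sInt (μ σ) fun x => ψ x (w x)) := by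
  have h1 : ∀ σ, Continuous fun w : C(𝔼, 𝔼) => sInt (μ σ) fun x => ψ x (w x) := fun σ =>
    (continuous_integral_clm_apply hψ hψc _).sub (continuous_integral_clm_apply hψ hψc _)
  have h2 : ∀ w : C(𝔼, 𝔼), Measurable fun σ => sInt (μ σ) fun x => ψ x (w x) := fun w =>
    measurable_sInt_of_hasCompactSupport hμ hM (hψ.clm_apply w.continuous) (hψc.clm_apply_left _)
  exact measurable_uncurry_of_continuous_of_measurable h1 h2

theorem measurable_sInt_clm_apply {μ : ℝ → SignedMeasure 𝔼} {M : ℝ}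
    (hμ : ∀ u : 𝔼 → ℝ, ContDiff ℝ ∞ u → HasCompactSupport u → Measurable fun σ => sInt (μ σ) u)
    (hM : ∀ σ, (μ σ).totalVariation.real univ ≤ M) {ψ : 𝔼 → 𝔼 →L[ℝ] ℝ} (hψ : Continuous ψ)
    (hψc : HasCompactSupport ψ) {V : ℝ → 𝔼 → 𝔼} (hVm : Measurable (Function.uncurry V))
    (hVc : ∀ t, Continuous (V t)) : Measurable fun σ => sInt (μ σ) fun x => ψ x (V σ x) := by
  borelize C(𝔼, 𝔼)
  have hv : Measurable fun σ => (⟨V σ, hVc σ⟩ : C(𝔼, 𝔼)) :=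
    measurable_continuousMap_of_eval fun x =>
      hVm.comp (measurable_id.prodMk measurable_const)
  have h := (measurable_uncurry_sInt_clm_apply hμ hM hψ hψc).comp (hv.prodMk measurable_id)
  simpa only [Function.comp_def, Function.uncurry_apply_pair, ContinuousMap.coe_mk, id] using h

/-- A velocity field on `[0, T]` which is bounded by an integrable function of time and admits
the modulus of continuity `ρ` up to the same integrable function. -/
structure OsgoodBound {d : ℕ} (T : ℝ)
    (V : ℝ → EuclideanSpace ℝ (Fin d) → EuclideanSpace ℝ (Fin d)) (A ρ : ℝ → ℝ) : Prop where
  measurable : Measurable (Function.uncurry V)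
  continuous : ∀ t, Continuous (V t)
  nonneg : ∀ t, 0 ≤ A t
  integrableOn : IntegrableOn A (Icc 0 T)
  bound : ∀ᵐ σ ∂volume.restrict (Icc 0 T), ∀ x, ‖V σ x‖ ≤ A σ
  mono : MonotoneOn ρ (Ico 0 1)
  modulus_nonneg : ∀ r, 0 ≤ ρ r
  osc : ∀ (t : ℝ) (x y : EuclideanSpace ℝ (Fin d)), ‖x - y‖ < 1 → ‖V t x - V t y‖ ≤ A t * ρ ‖x - y‖

variable {T : ℝ} {V : ℝ → EuclideanSpace ℝ (Fin d) → EuclideanSpace ℝ (Fin d)} {A ρ : ℝ → ℝ}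

namespace OsgoodBound

theorem intervalIntegrable (h : OsgoodBound T V A ρ) {s t : ℝ} (hs : s ∈ Icc 0 T)
    (ht : t ∈ Icc 0 T) : IntervalIntegrable A volume s t :=
  (h.integrableOn.mono_set (uIcc_subset_Icc hs ht)).intervalIntegrable

theorem integral_nonneg (h : OsgoodBound T V A ρ) {s t : ℝ} (hst : s ≤ t) :
    0 ≤ ∫ σ in s..t, A σ :=
  intervalIntegral.integral_nonneg hst fun σ _ => h.nonneg σ

theorem ae_bound (h : OsgoodBound T V A ρ) {s t : ℝ} (hs : s ∈ Icc 0 T) (ht : t ∈ Icc 0 T) :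
    ∀ᵐ σ, σ ∈ Ioc s t → ∀ x, ‖V σ x‖ ≤ A σ := by
  have := ae_restrict_of_ae_restrict_of_subset
    (Ioc_subset_Icc_self.trans (Icc_subset_Icc hs.1 ht.2)) h.bound
  rwa [ae_restrict_iff' measurableSet_Ioc] at this

theorem osc_le (h : OsgoodBound T V A ρ) {δ : ℝ} (hδ : δ < 1) (σ : ℝ) {x y : 𝔼}
    (hxy : ‖x - y‖ ≤ δ) : ‖V σ x - V σ y‖ ≤ A σ * ρ δ := by
  refine (h.osc σ x y (hxy.trans_lt hδ)).trans ?_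
  have := h.nonneg σ
  gcongr
  exact h.mono ⟨norm_nonneg _, hxy.trans_lt hδ⟩ ⟨(norm_nonneg _).trans hxy, hδ⟩ hxy

theorem intervalIntegrable_apply (h : OsgoodBound T V A ρ) {s t : ℝ} (hst : s ≤ t)
    (hs : s ∈ Icc 0 T) (ht : t ∈ Icc 0 T) {c : ℝ → 𝔼} (hc : Measurable c) :
    IntervalIntegrable (fun σ => V σ (c σ)) volume s t := by
  refine (h.intervalIntegrable hs ht).mono_fun'
    (h.measurable.comp (measurable_id.prodMk hc)).aestronglyMeasurable ?_
  rw [uIoc_of_le hst]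
  exact (ae_restrict_iff' measurableSet_Ioc).2 ((h.ae_bound hs ht).mono fun σ hσ hm => hσ hm _)

end OsgoodBound

theorem abs_sInt_sub_le_of_isSignedSolution (h : OsgoodBound T V A ρ)
    {μ : ℝ → SignedMeasure 𝔼} (hμ : IsSignedSolution T V μ) {M : ℝ}
    (hM : ∀ σ, (μ σ).totalVariation.real univ ≤ M) {u : 𝔼 → ℝ} (hu : ContDiff ℝ ∞ u)
    (huc : HasCompactSupport u) {P : ℝ} (hP : ∀ x, ‖fderiv ℝ u x‖ ≤ P) {s t : ℝ} (hst : s ≤ t)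
    (hs : s ∈ Icc 0 T) (ht : t ∈ Icc 0 T) :
    |sInt (μ t) u - sInt (μ s) u| ≤ M * P * ∫ σ in s..t, A σ := by
  have hP0 : 0 ≤ P := (norm_nonneg (fderiv ℝ u 0)).trans (hP 0)
  rw [hμ u hu huc s hs t ht, ← intervalIntegral.integral_const_mul]
  refine intervalIntegral.norm_integral_le_of_norm_le (E := ℝ) hst ?_
    ((h.intervalIntegrable hs ht).const_mul _)
  filter_upwards [h.ae_bound hs ht] with σ hσ hm
  have hA := h.nonneg σ
  have := abs_sInt_le (μ σ) (f := fun x => fderiv ℝ u x (V σ x)) (c := P * A σ) fun x =>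
    ((fderiv ℝ u x).le_opNorm _).trans
      (mul_le_mul (hP x) (hσ hm x) (norm_nonneg _) hP0)
  rw [Real.norm_eq_abs, mul_assoc]
  exact this.trans (by have := hM σ; gcongr)

theorem continuous_sInt_projIcc (hT : 0 ≤ T) (h : OsgoodBound T V A ρ)
    {μ : ℝ → SignedMeasure 𝔼} (hμ : IsSignedSolution T V μ) {M : ℝ}
    (hM : ∀ σ, (μ σ).totalVariation.real univ ≤ M) {u : 𝔼 → ℝ} (hu : ContDiff ℝ ∞ u)
    (huc : HasCompactSupport u) :
    Continuous fun σ : ℝ => sInt (μ (projIcc 0 T hT σ)) u := by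
  obtain ⟨P, hP⟩ := (HasCompactSupport.fderiv ℝ huc).exists_bound_of_continuous
    (hu.continuous_fderiv (by simp))
  have h0 : (0 : ℝ) ∈ Icc 0 T := left_mem_Icc.2 hT
  have hF : Continuous fun σ : ℝ => ∫ r in (0 : ℝ)..(projIcc 0 T hT σ : ℝ), A r := by
    have h1 := intervalIntegral.continuousOn_primitive_interval'
      (h.intervalIntegrable h0 (right_mem_Icc.2 hT)) left_mem_uIcc
    rw [uIcc_of_le hT] at h1
    exact h1.comp_continuous (by fun_prop) fun σ => (projIcc 0 T hT σ).2
  have key : ∀ s ∈ Icc 0 T, ∀ t ∈ Icc 0 T, s ≤ t → |sInt (μ t) u - sInt (μ s) u| ≤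
      M * P * |(∫ r in (0 : ℝ)..t, A r) - ∫ r in (0 : ℝ)..s, A r| := by
    intro s hs t ht hst
    rw [intervalIntegral.integral_interval_sub_left (h.intervalIntegrable h0 ht)
      (h.intervalIntegrable h0 hs), abs_of_nonneg (h.integral_nonneg hst)]
    exact abs_sInt_sub_le_of_isSignedSolution h hμ hM hu huc hP hst hs ht
  rw [continuous_iff_continuousAt]
  intro τ
  refine tendsto_iff_dist_tendsto_zero.2 (squeeze_zero (fun _ => dist_nonneg)
    (g := fun σ => M * P * dist (∫ r in (0 : ℝ)..(projIcc 0 T hT σ : ℝ), A r)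
      (∫ r in (0 : ℝ)..(projIcc 0 T hT τ : ℝ), A r)) (fun σ => ?_) ?_)
  · rw [Real.dist_eq, Real.dist_eq]
    rcases le_total (projIcc 0 T hT τ) (projIcc 0 T hT σ) with hle | hle
    · exact key _ (projIcc 0 T hT τ).2 _ (projIcc 0 T hT σ).2 hle
    · rw [abs_sub_comm, abs_sub_comm (∫ r in (0 : ℝ)..(projIcc 0 T hT σ : ℝ), A r)]
      exact key _ (projIcc 0 T hT σ).2 _ (projIcc 0 T hT τ).2 hle
  · simpa using (tendsto_iff_dist_tendsto_zero.1 (hF.tendsto τ)).const_mul (M * P)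

theorem aestronglyMeasurable_sInt_clm_apply (hT : 0 ≤ T) (h : OsgoodBound T V A ρ)
    {μ : ℝ → SignedMeasure 𝔼} (hμ : IsSignedSolution T V μ) {M : ℝ}
    (hM : ∀ σ, (μ σ).totalVariation.real univ ≤ M) {ψ : 𝔼 → 𝔼 →L[ℝ] ℝ} (hψ : Continuous ψ)
    (hψc : HasCompactSupport ψ) :
    AEStronglyMeasurable (fun σ => sInt (μ σ) fun x => ψ x (V σ x))
      (volume.restrict (Icc 0 T)) := by
  have h1 := measurable_sInt_clm_apply (μ := fun σ => μ (projIcc 0 T hT σ))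
    (fun u hu huc => (continuous_sInt_projIcc hT h hμ hM hu huc).measurable)
    (fun σ => hM _) hψ hψc h.measurable h.continuous
  refine h1.aestronglyMeasurable.congr ?_
  filter_upwards [ae_restrict_mem measurableSet_Icc] with σ hσ
  rw [projIcc_of_mem hT hσ]

end Solutions

section TestFunctions

/-- Smooth compactly supported functions whose derivative is bounded by `L` and is
`B`-Lipschitz. -/
structure TestBound {d : ℕ} (φ : EuclideanSpace ℝ (Fin d) → ℝ) (L B : ℝ) : Prop where
  contDiff : ContDiff ℝ ∞ φ
  hasCompactSupport : HasCompactSupport φ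
  norm_fderiv_le : ∀ x, ‖fderiv ℝ φ x‖ ≤ L
  norm_fderiv_sub_le : ∀ x y, ‖fderiv ℝ φ x - fderiv ℝ φ y‖ ≤ B * ‖x - y‖
  fst_nonneg : 0 ≤ L
  snd_nonneg : 0 ≤ B

variable {d : ℕ}

local notation "𝔼" => EuclideanSpace ℝ (Fin d)

variable {φ : EuclideanSpace ℝ (Fin d) → ℝ} {L B : ℝ}

theorem exists_lipschitzWith_fderiv (hφ : ContDiff ℝ ∞ φ) (hc : HasCompactSupport φ) :
    ∃ B : ℝ≥0, LipschitzWith B (fderiv ℝ φ) := by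
  have h2 : ContDiff ℝ 1 (fderiv ℝ φ) := hφ.fderiv_right (by norm_cast)
  exact h2.lipschitzWith_of_hasCompactSupport (HasCompactSupport.fderiv ℝ hc) (by simp)

theorem exists_testBound (hφ : ContDiff ℝ ∞ φ) (hc : HasCompactSupport φ) :
    ∃ L B, TestBound φ L B := by
  obtain ⟨L, hL⟩ := (HasCompactSupport.fderiv ℝ hc).exists_bound_of_continuous
    (hφ.continuous_fderiv (by simp))
  obtain ⟨B, hB⟩ := exists_lipschitzWith_fderiv hφ hc
  refine ⟨L, B, hφ, hc, hL, fun x y => ?_, (norm_nonneg (fderiv ℝ φ 0)).trans (hL 0),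
    NNReal.coe_nonneg B⟩
  rw [← dist_eq_norm, ← dist_eq_norm]
  exact hB.dist_le_mul x y

namespace TestBound

theorem mono (h : TestBound φ L B) {L' B' : ℝ} (hL : L ≤ L') (hB : B ≤ B') :
    TestBound φ L' B' :=
  ⟨h.contDiff, h.hasCompactSupport, fun x => (h.norm_fderiv_le x).trans hL,
    fun x y => (h.norm_fderiv_sub_le x y).trans (by gcongr), h.fst_nonneg.trans hL,
    h.snd_nonneg.trans hB⟩

theorem differentiable (h : TestBound φ L B) : Differentiable ℝ φ :=
  h.contDiff.differentiable (by simp)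

theorem contDiff_fderiv (h : TestBound φ L B) : ContDiff ℝ ∞ (fderiv ℝ φ) :=
  h.contDiff.fderiv_right (by simp)

theorem hasCompactSupport_fderiv (h : TestBound φ L B) : HasCompactSupport (fderiv ℝ φ) :=
  HasCompactSupport.fderiv ℝ h.hasCompactSupport

theorem abs_sub_le (h : TestBound φ L B) (x y : 𝔼) : |φ x - φ y| ≤ L * ‖x - y‖ :=
  convex_univ.norm_image_sub_le_of_norm_fderiv_le (fun z _ => h.differentiable z)
    (fun z _ => h.norm_fderiv_le z) (mem_univ y) (mem_univ x)

theorem abs_add_sub_sub_le (h : TestBound φ L B) {x w : 𝔼} {r : ℝ} (hw : ‖w‖ ≤ r) :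
    |φ (x + w) - φ x - fderiv ℝ φ x w| ≤ B * r ^ 2 := by
  have hr : 0 ≤ r := (norm_nonneg w).trans hw
  have hB := h.snd_nonneg
  have h1 := (convex_closedBall x r).norm_image_sub_le_of_norm_fderiv_le' (f := φ)
    (φ := fderiv ℝ φ x) (C := B * r) (x := x) (y := x + w) (fun z _ => h.differentiable z)
    (fun z hz => (h.norm_fderiv_sub_le z x).trans
      (by rw [mem_closedBall, dist_eq_norm] at hz; gcongr))
    (mem_closedBall_self hr) (by simpa [mem_closedBall] using hw)
  rw [add_sub_cancel_left] at h1
  refine h1.trans ?_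
  rw [sq, ← mul_assoc]
  gcongr

theorem norm_fderiv_fderiv_le (h : TestBound φ L B) (x : 𝔼) :
    ‖fderiv ℝ (fderiv ℝ φ) x‖ ≤ B :=
  norm_fderiv_le_of_lip' ℝ h.snd_nonneg (Eventually.of_forall fun y => h.norm_fderiv_sub_le y x)

theorem comp_add (h : TestBound φ L B) {W : 𝔼 → 𝔼} (hW : ContDiff ℝ ∞ W) {m α β : ℝ}
    (hm : ∀ x, ‖W x‖ ≤ m) (hα : ∀ x, ‖fderiv ℝ W x‖ ≤ α)
    (hβ : ∀ x y, ‖fderiv ℝ W x - fderiv ℝ W y‖ ≤ β * ‖x - y‖) (hβ0 : 0 ≤ β) :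
    TestBound (fun x => φ (x + W x)) (L * (1 + α)) (B * (1 + α) ^ 2 + L * β) := by
  have hα0 : 0 ≤ α := (norm_nonneg (fderiv ℝ W 0)).trans (hα 0)
  have hL := h.fst_nonneg
  have hB := h.snd_nonneg
  have hWd : Differentiable ℝ W := hW.differentiable (by simp)
  have hG : ∀ x, HasFDerivAt (fun x => x + W x) (ContinuousLinearMap.id ℝ 𝔼 + fderiv ℝ W x) x :=
    fun x => (hasFDerivAt_id x).add (hWd x).hasFDerivAt
  have hGn : ∀ x, ‖ContinuousLinearMap.id ℝ 𝔼 + fderiv ℝ W x‖ ≤ 1 + α := fun x =>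
    (norm_add_le _ _).trans (add_le_add ContinuousLinearMap.norm_id_le (hα x))
  have hd : ∀ x, fderiv ℝ (fun x => φ (x + W x)) x =
      (fderiv ℝ φ (x + W x)).comp (ContinuousLinearMap.id ℝ 𝔼 + fderiv ℝ W x) := fun x =>
    ((h.differentiable (x + W x)).hasFDerivAt.comp x (hG x)).fderiv
  have hGl : ∀ x y, ‖(x + W x) - (y + W y)‖ ≤ (1 + α) * ‖x - y‖ := fun x y =>
    convex_univ.norm_image_sub_le_of_norm_hasFDerivWithin_le
      (fun z _ => (hG z).hasFDerivWithinAt) (fun z _ => hGn z) (mem_univ y) (mem_univ x)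
  refine ⟨h.contDiff.comp (contDiff_id.add hW), ?_, fun x => ?_, fun x y => ?_, by positivity,
    by positivity⟩
  · obtain ⟨R, hR⟩ := h.hasCompactSupport.isCompact.isBounded.subset_closedBall 0
    refine HasCompactSupport.of_support_subset_isCompact (isCompact_closedBall 0 (R + m)) ?_
    intro x hx
    have h1 : x + W x ∈ closedBall (0 : 𝔼) R := hR (subset_tsupport φ hx)
    rw [mem_closedBall_zero_iff] at h1 ⊢
    have h2 := norm_sub_le (x + W x) (W x)
    rw [add_sub_cancel_right] at h2
    linarith [hm x]
  · rw [hd]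
    refine (ContinuousLinearMap.opNorm_comp_le _ _).trans ?_
    exact mul_le_mul (h.norm_fderiv_le _) (hGn x) (norm_nonneg _) hL
  · rw [hd, hd]
    have h1 : (fderiv ℝ φ (x + W x)).comp (ContinuousLinearMap.id ℝ 𝔼 + fderiv ℝ W x) -
        (fderiv ℝ φ (y + W y)).comp (ContinuousLinearMap.id ℝ 𝔼 + fderiv ℝ W y) =
        (fderiv ℝ φ (x + W x) - fderiv ℝ φ (y + W y)).comp
          (ContinuousLinearMap.id ℝ 𝔼 + fderiv ℝ W x) +
        (fderiv ℝ φ (y + W y)).comp (fderiv ℝ W x - fderiv ℝ W y) := by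
      ext v
      simp only [sub_apply, add_apply,
        ContinuousLinearMap.comp_apply, map_add, map_sub, ContinuousLinearMap.id_apply]
      ring
    rw [h1]
    refine (norm_add_le _ _).trans ?_
    have h2 : ‖(fderiv ℝ φ (x + W x) - fderiv ℝ φ (y + W y)).comp
          (ContinuousLinearMap.id ℝ 𝔼 + fderiv ℝ W x)‖ ≤
        B * ((1 + α) * ‖x - y‖) * (1 + α) := by
      refine (ContinuousLinearMap.opNorm_comp_le _ _).trans ?_
      refine mul_le_mul ((h.norm_fderiv_sub_le _ _).trans ?_) (hGn x) (norm_nonneg _)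
        (by positivity)
      exact mul_le_mul_of_nonneg_left (hGl x y) hB
    have h3 : ‖(fderiv ℝ φ (y + W y)).comp (fderiv ℝ W x - fderiv ℝ W y)‖ ≤
        L * (β * ‖x - y‖) := by
      refine (ContinuousLinearMap.opNorm_comp_le _ _).trans ?_
      exact mul_le_mul (h.norm_fderiv_le _) (hβ x y) (norm_nonneg _) hL
    calc _ ≤ _ := add_le_add h2 h3
      _ = _ := by ring

/-- The derivative of `φ` in the direction of a smooth bounded field is again a test function. -/
theorem norm_fderiv_fderiv_apply_le (h : TestBound φ L B) {Q : 𝔼 → 𝔼} (hQ : Differentiable ℝ Q)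
    {m α : ℝ} (hm : ∀ x, ‖Q x‖ ≤ m) (hα : ∀ x, ‖fderiv ℝ Q x‖ ≤ α) (x : 𝔼) :
    ‖fderiv ℝ (fun x => fderiv ℝ φ x (Q x)) x‖ ≤ B * m + L * α := by
  have h1 := ((h.contDiff_fderiv.differentiable (by simp)) x).hasFDerivAt.clm_apply
    (hQ x).hasFDerivAt
  rw [h1.fderiv, add_comm]
  refine (norm_add_le _ _).trans (add_le_add ?_ ?_)
  · refine ((fderiv ℝ (fderiv ℝ φ) x).flip.le_opNorm _).trans ?_
    rw [ContinuousLinearMap.opNorm_flip]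
    exact mul_le_mul (h.norm_fderiv_fderiv_le x) (hm x) (norm_nonneg _) h.snd_nonneg
  · refine (ContinuousLinearMap.opNorm_comp_le _ _).trans ?_
    exact mul_le_mul (h.norm_fderiv_le _) (hα x) (norm_nonneg _) h.fst_nonneg

end TestBound

end TestFunctions

section Drift

variable {d : ℕ}

local notation "𝔼" => EuclideanSpace ℝ (Fin d)

/-- The displacement of a particle frozen at `x` between the times `s` and `t`. -/
def drift {d : ℕ} (V : ℝ → EuclideanSpace ℝ (Fin d) → EuclideanSpace ℝ (Fin d)) (s t : ℝ)
    (x : EuclideanSpace ℝ (Fin d)) : EuclideanSpace ℝ (Fin d) :=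
  ∫ σ in s..t, V σ x

variable {T : ℝ} {V : ℝ → EuclideanSpace ℝ (Fin d) → EuclideanSpace ℝ (Fin d)} {A ρ : ℝ → ℝ}
  {s t δ : ℝ}

namespace OsgoodBound

theorem continuous_drift (h : OsgoodBound T V A ρ) (hst : s ≤ t) (hs : s ∈ Icc 0 T)
    (ht : t ∈ Icc 0 T) : Continuous (drift V s t) := by
  refine intervalIntegral.continuous_of_dominated_interval (bound := A) (fun x => ?_) (fun x => ?_)
    (h.intervalIntegrable hs ht) (Eventually.of_forall fun σ _ => h.continuous σ)
  · exact (h.measurable.comp (measurable_id.prodMk measurable_const)).aestronglyMeasurable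
  · rw [uIoc_of_le hst]
    filter_upwards [h.ae_bound hs ht] with σ hσ hm using hσ hm x

theorem norm_drift_le (h : OsgoodBound T V A ρ) (hst : s ≤ t) (hs : s ∈ Icc 0 T)
    (ht : t ∈ Icc 0 T) (x : 𝔼) : ‖drift V s t x‖ ≤ ∫ σ in s..t, A σ :=
  intervalIntegral.norm_integral_le_of_norm_le hst
    ((h.ae_bound hs ht).mono fun _ hσ hm => hσ hm x) (h.intervalIntegrable hs ht)

theorem norm_integral_sub_drift_le (h : OsgoodBound T V A ρ) (hst : s ≤ t) (hs : s ∈ Icc 0 T)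
    (ht : t ∈ Icc 0 T) (hδ : δ < 1) {c : ℝ → 𝔼} (hc : Measurable c) {x : 𝔼}
    (hx : ∀ σ ∈ Ioc s t, ‖c σ - x‖ ≤ δ) :
    ‖(∫ σ in s..t, V σ (c σ)) - drift V s t x‖ ≤ ρ δ * ∫ σ in s..t, A σ := by
  rw [drift, ← intervalIntegral.integral_sub (h.intervalIntegrable_apply hst hs ht hc)
    (h.intervalIntegrable_apply hst hs ht measurable_const), ← intervalIntegral.integral_const_mul]
  refine intervalIntegral.norm_integral_le_of_norm_le hst (Eventually.of_forall fun σ hσ => ?_)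
    ((h.intervalIntegrable hs ht).const_mul _)
  rw [mul_comm]
  exact h.osc_le hδ σ (hx σ hσ)

theorem norm_drift_sub_le (h : OsgoodBound T V A ρ) (hst : s ≤ t) (hs : s ∈ Icc 0 T)
    (ht : t ∈ Icc 0 T) (hδ : δ < 1) {x y : 𝔼} (hxy : ‖y - x‖ ≤ δ) :
    ‖drift V s t y - drift V s t x‖ ≤ ρ δ * ∫ σ in s..t, A σ :=
  h.norm_integral_sub_drift_le hst hs ht hδ measurable_const fun _ _ => hxy

end OsgoodBound

theorem integral_integral_fderiv_apply (h : OsgoodBound T V A ρ) {φ : 𝔼 → ℝ} {L B : ℝ}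
    (hφ : TestBound φ L B) (hst : s ≤ t) (hs : s ∈ Icc 0 T)
    (ht : t ∈ Icc 0 T) (p : Measure 𝔼) [IsFiniteMeasure p] :
    IntervalIntegrable (fun σ => ∫ x, fderiv ℝ φ x (V σ x) ∂p) volume s t ∧
    ∫ σ in s..t, ∫ x, fderiv ℝ φ x (V σ x) ∂p = ∫ x, fderiv ℝ φ x (drift V s t x) ∂p := by
  have hA : Integrable A (volume.restrict (Ioc s t)) := (h.intervalIntegrable hs ht).1
  have hm : Measurable fun q : ℝ × 𝔼 => fderiv ℝ φ q.2 (V q.1 q.2) := by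
    have h1 : Continuous fun q : (𝔼 →L[ℝ] ℝ) × 𝔼 => q.1 q.2 := by fun_prop
    exact h1.measurable.comp (((hφ.contDiff_fderiv.continuous.measurable).comp measurable_snd).prodMk
      h.measurable)
  have hint : Integrable (Function.uncurry fun (σ : ℝ) (x : 𝔼) => fderiv ℝ φ x (V σ x))
      ((volume.restrict (Ioc s t)).prod p) := by
    refine ((hA.comp_fst p).const_mul L).mono' hm.aestronglyMeasurable ?_
    have h1 : ∀ᵐ σ ∂volume.restrict (Ioc s t), ∀ x, ‖V σ x‖ ≤ A σ :=
      (ae_restrict_iff' measurableSet_Ioc).2 (h.ae_bound hs ht)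
    filter_upwards [Measure.quasiMeasurePreserving_fst.ae h1] with q hq
    exact ((fderiv ℝ φ q.2).le_opNorm _).trans
      (mul_le_mul (hφ.norm_fderiv_le _) (hq _) (norm_nonneg _) hφ.fst_nonneg)
  refine ⟨(intervalIntegrable_iff_integrableOn_Ioc_of_le hst).2 hint.integral_prod_left, ?_⟩
  rw [intervalIntegral.integral_of_le hst, integral_integral_swap hint]
  refine integral_congr_ae (Eventually.of_forall fun x => ?_)
  simp only
  rw [← intervalIntegral.integral_of_le hst, drift, ContinuousLinearMap.intervalIntegral_comp_comm]
  exact h.intervalIntegrable_apply hst hs ht measurable_const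

end Drift

section OneStep

/-- A constant in the derivative bound for mollified vector fields. -/
def mollConst (d : ℕ) : ℝ :=
  (exists_norm_fderiv_mollify_le (EuclideanSpace ℝ (Fin d)) (EuclideanSpace ℝ (Fin d))).choose

/-- A family of functionals on test functions which is transported, up to a small error, by the
mollified explicit Euler scheme for `V`. -/
def Follows {d : ℕ} (T : ℝ) (V : ℝ → EuclideanSpace ℝ (Fin d) → EuclideanSpace ℝ (Fin d))
    (A ρ : ℝ → ℝ) (M : ℝ) (ℓ : ℝ → (EuclideanSpace ℝ (Fin d) → ℝ) → ℝ) : Prop :=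
  ∀ ⦃δ s t L B : ℝ⦄ ⦃φ : EuclideanSpace ℝ (Fin d) → ℝ⦄, 0 < δ → δ < 1 → s ∈ Icc 0 T →
    t ∈ Icc 0 T → s ≤ t → (∫ σ in s..t, A σ) ≤ δ → TestBound φ L B →
    |ℓ t φ - ℓ s (fun x => φ (x + mollify δ (drift V s t) x))| ≤
      M * (3 * L * ρ δ * (∫ σ in s..t, A σ) +
        (12 * B + 2 * L * mollConst d / δ) * (∫ σ in s..t, A σ) ^ 2)

variable {d : ℕ}

local notation "𝔼" => EuclideanSpace ℝ (Fin d)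

variable {T : ℝ} {V : ℝ → EuclideanSpace ℝ (Fin d) → EuclideanSpace ℝ (Fin d)} {A ρ : ℝ → ℝ}
  {s t δ : ℝ}

theorem mollConst_pos (d : ℕ) : 0 < mollConst d :=
  (exists_norm_fderiv_mollify_le (EuclideanSpace ℝ (Fin d))
    (EuclideanSpace ℝ (Fin d))).choose_spec.1

theorem norm_fderiv_mollify_le (hδ : 0 < δ) {f : 𝔼 → 𝔼} (hf : Continuous f) {x : 𝔼} {w : ℝ}
    (h : ∀ y, ‖y - x‖ ≤ δ → ‖f y - f x‖ ≤ w) : ‖fderiv ℝ (mollify δ f) x‖ ≤ mollConst d * w / δ :=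
  (exists_norm_fderiv_mollify_le (EuclideanSpace ℝ (Fin d))
    (EuclideanSpace ℝ (Fin d))).choose_spec.2 δ hδ f hf x w h

theorem follows_of_isSolution {hT : 0 ≤ T} (h : OsgoodBound T V A ρ)
    {γ : C(Icc (0 : ℝ) T, EuclideanSpace ℝ (Fin d))} (hγ : IsSolution T hT V γ) :
    Follows T V A ρ 1 fun σ φ => φ (γ (projIcc 0 T hT σ)) := by
  intro δ s t L B φ hδ hδ1 hs ht hst hH hφ
  have hL := hφ.fst_nonneg
  have hB := hφ.snd_nonneg
  have hκ := mollConst_pos d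
  have h0 : (0 : ℝ) ∈ Icc 0 T := left_mem_Icc.2 hT
  set c : ℝ → 𝔼 := fun σ => γ (projIcc 0 T hT σ) with hc
  have hcm : Measurable c := (γ.continuous.comp continuous_projIcc).measurable
  have hinc : ∀ r ∈ Icc 0 T, c r - c s = ∫ σ in s..r, V σ (c σ) := by
    intro r hr
    have h1 := hγ ⟨r, hr⟩
    have h2 := hγ ⟨s, hs⟩
    have hi : ∀ u ∈ Icc 0 T, IntervalIntegrable (fun σ => V σ (c σ)) volume 0 u := fun u hu =>
      h.intervalIntegrable_apply hu.1 h0 hu hcm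
    rw [← intervalIntegral.integral_interval_sub_left (hi r hr) (hi s hs), ← h1, ← h2]
    simp only [hc, projIcc_of_mem hT hr, projIcc_of_mem hT hs, sub_sub_sub_cancel_right]
  have hnear : ∀ r ∈ Ioc s t, ‖c r - c s‖ ≤ δ := by
    intro r hr
    have hrT : r ∈ Icc 0 T := ⟨hs.1.trans hr.1.le, hr.2.trans ht.2⟩
    rw [hinc r hrT]
    refine (intervalIntegral.norm_integral_le_of_norm_le hr.1.le
      ((h.ae_bound hs hrT).mono fun _ hσ hm => hσ hm _) (h.intervalIntegrable hs hrT)).trans ?_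
    refine le_trans ?_ hH
    exact intervalIntegral.integral_mono_interval le_rfl hr.1.le hr.2
      (Eventually.of_forall h.nonneg) (h.intervalIntegrable hs ht)
  have h1 := h.norm_integral_sub_drift_le hst hs ht hδ1 hcm hnear
  have h2 := norm_mollify_sub_le hδ (h.continuous_drift hst hs ht) (x := c s)
    fun y hy => h.norm_drift_sub_le hst hs ht hδ1 hy
  have h3 : ‖c t - (c s + mollify δ (drift V s t) (c s))‖ ≤
      2 * (ρ δ * ∫ σ in s..t, A σ) := by
    have h4 : c t - (c s + mollify δ (drift V s t) (c s)) =
        ((∫ σ in s..t, V σ (c σ)) - drift V s t (c s)) -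
          (mollify δ (drift V s t) (c s) - drift V s t (c s)) := by
      rw [← hinc t ht]
      abel
    rw [h4]
    refine (norm_sub_le _ _).trans ?_
    linarith
  have hρ := h.modulus_nonneg δ
  have hH0 := h.integral_nonneg hst
  calc |φ (c t) - φ (c s + mollify δ (drift V s t) (c s))|
      ≤ L * ‖c t - (c s + mollify δ (drift V s t) (c s))‖ := hφ.abs_sub_le _ _
    _ ≤ L * (2 * (ρ δ * ∫ σ in s..t, A σ)) := by gcongr
    _ ≤ _ := by
      have h5 : 0 ≤ L * (ρ δ * ∫ σ in s..t, A σ) := by positivity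
      have h6 : 0 ≤ (12 * B + 2 * L * mollConst d / δ) * (∫ σ in s..t, A σ) ^ 2 := by positivity
      linarith

theorem abs_sInt_fderiv_apply_sub_le (h : OsgoodBound T V A ρ)
    {μ : ℝ → SignedMeasure 𝔼} (hμ : IsSignedSolution T V μ) {M : ℝ}
    (hM : ∀ σ, (μ σ).totalVariation.real univ ≤ M) {φ : 𝔼 → ℝ} {L B : ℝ} (hφ : TestBound φ L B)
    (hδ : 0 < δ) (hδ1 : δ < 1) (hst : s ≤ t) (hs : s ∈ Icc 0 T) (ht : t ∈ Icc 0 T)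
    (hb : ∀ x, ‖V t x‖ ≤ A t) :
    |sInt (μ t) (fun x => fderiv ℝ φ x (V t x)) - sInt (μ s) (fun x => fderiv ℝ φ x (V t x))| ≤
      (2 * M * L * ρ δ + M * (3 * B + 2 * L * mollConst d / δ) * ∫ σ in s..t, A σ) * A t := by
  have hL := hφ.fst_nonneg
  have hA := h.nonneg t
  have hint : ∀ (ν : SignedMeasure 𝔼) (v : 𝔼 → 𝔼), Continuous v →
      Integrable (fun x => fderiv ℝ φ x (v x)) ν.totalVariation := fun ν v hv =>
    integrable_totalVariation_of_hasCompactSupport ν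
      (hφ.contDiff_fderiv.continuous.clm_apply hv) (hφ.hasCompactSupport_fderiv.clm_apply_left v)
  have hQ : ContDiff ℝ ∞ (mollify δ (V t)) := contDiff_mollify δ (h.continuous t)
  have hclose : ∀ x, |fderiv ℝ φ x (V t x) - fderiv ℝ φ x (mollify δ (V t) x)| ≤
      L * (A t * ρ δ) := fun x => by
    rw [← map_sub]
    refine ((fderiv ℝ φ x).le_opNorm _).trans
      (mul_le_mul (hφ.norm_fderiv_le x) ?_ (norm_nonneg _) hL)
    rw [norm_sub_rev]
    exact norm_mollify_sub_le hδ (h.continuous t) fun y hy => h.osc_le hδ1 t hy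
  have hgrad := hφ.norm_fderiv_fderiv_apply_le (hQ.differentiable (by simp))
    (norm_mollify_le hδ (h.continuous t) hb)
    fun x => norm_fderiv_mollify_le hδ (h.continuous t) (x := x) (w := A t + A t)
      fun y _ => (norm_sub_le _ _).trans (add_le_add (hb y) (hb x))
  have e1 := abs_sInt_sub_le (hM t) (hint _ _ (h.continuous t)) (hint _ _ hQ.continuous) hclose
  have e2 := abs_sInt_sub_le (hM s) (hint _ _ (h.continuous t)) (hint _ _ hQ.continuous) hclose
  have e3 := abs_sInt_sub_le_of_isSignedSolution h hμ hM (hφ.contDiff_fderiv.clm_apply hQ)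
    (hφ.hasCompactSupport_fderiv.clm_apply_left _) hgrad hst hs ht
  rw [abs_le] at e1 e2 e3 ⊢
  constructor
  · have : (2 * M * L * ρ δ + M * (3 * B + 2 * L * mollConst d / δ) * ∫ σ in s..t, A σ) * A t =
        M * (L * (A t * ρ δ)) + M * (L * (A t * ρ δ)) +
        M * (B * (3 * A t) + L * (mollConst d * (A t + A t) / δ)) * ∫ σ in s..t, A σ := by ring
    linarith
  · have : (2 * M * L * ρ δ + M * (3 * B + 2 * L * mollConst d / δ) * ∫ σ in s..t, A σ) * A t =
        M * (L * (A t * ρ δ)) + M * (L * (A t * ρ δ)) +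
        M * (B * (3 * A t) + L * (mollConst d * (A t + A t) / δ)) * ∫ σ in s..t, A σ := by ring
    linarith

theorem follows_sInt (hT : 0 ≤ T) (h : OsgoodBound T V A ρ) {μ : ℝ → SignedMeasure 𝔼}
    (hμ : IsSignedSolution T V μ) {M : ℝ} (hM : ∀ σ, (μ σ).totalVariation.real univ ≤ M) :
    Follows T V A ρ M fun σ φ => sInt (μ σ) φ := by
  intro δ s t L B φ hδ hδ1 hs ht hst hH hφ
  have hL := hφ.fst_nonneg
  have hB := hφ.snd_nonneg
  have hκ := mollConst_pos d
  have hM0 : 0 ≤ M := measureReal_nonneg.trans (hM 0)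
  have hρ := h.modulus_nonneg δ
  have hH0 := h.integral_nonneg hst
  have hAi := h.intervalIntegrable hs ht
  set H := ∫ σ in s..t, A σ with hHdef
  set W := mollify δ (drift V s t) with hW
  have hUc := h.continuous_drift hst hs ht
  have hWs : ContDiff ℝ ∞ W := contDiff_mollify δ hUc
  have hint : ∀ v : 𝔼 → 𝔼, Continuous v →
      Integrable (fun x => fderiv ℝ φ x (v x)) (μ s).totalVariation := fun v hv =>
    integrable_totalVariation_of_hasCompactSupport _
      (hφ.contDiff_fderiv.continuous.clm_apply hv) (hφ.hasCompactSupport_fderiv.clm_apply_left v)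
  have hφi : Integrable φ (μ s).totalVariation :=
    integrable_totalVariation_of_hasCompactSupport _ hφ.contDiff.continuous hφ.hasCompactSupport
  obtain ⟨hp1, hp2⟩ := integral_integral_fderiv_apply h hφ hst hs ht
    (μ s).toJordanDecomposition.posPart
  obtain ⟨hn1, hn2⟩ := integral_integral_fderiv_apply h hφ hst hs ht
    (μ s).toJordanDecomposition.negPart
  have hsi : IntervalIntegrable (fun σ => sInt (μ s) fun x => fderiv ℝ φ x (V σ x)) volume s t :=
    hp1.sub hn1
  have hsI : ∫ σ in s..t, sInt (μ s) (fun x => fderiv ℝ φ x (V σ x)) =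
      sInt (μ s) fun x => fderiv ℝ φ x (drift V s t x) := by
    simp only [sInt]
    rw [intervalIntegral.integral_sub hp1 hn1, hp2, hn2]
  have hti : IntervalIntegrable (fun σ => sInt (μ σ) fun x => fderiv ℝ φ x (V σ x))
      volume s t := by
    have hm := (aestronglyMeasurable_sInt_clm_apply hT h hμ hM hφ.contDiff_fderiv.continuous
      hφ.hasCompactSupport_fderiv).mono_set
      (Ioc_subset_Icc_self.trans (Icc_subset_Icc hs.1 ht.2))
    rw [← uIoc_of_le hst] at hm
    refine (hAi.const_mul (M * L)).mono_fun' hm ?_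
    rw [uIoc_of_le hst]
    refine (ae_restrict_iff' measurableSet_Ioc).2 ((h.ae_bound hs ht).mono fun σ hσ hm => ?_)
    have hA := h.nonneg σ
    refine (abs_sInt_le (μ σ) (c := L * A σ) fun x => ((fderiv ℝ φ x).le_opNorm _).trans
      (mul_le_mul (hφ.norm_fderiv_le x) (hσ hm x) (norm_nonneg _) hL)).trans ?_
    simp only [mul_assoc]
    gcongr
    exact hM σ
  have e1 : |(∫ σ in s..t, sInt (μ σ) fun x => fderiv ℝ φ x (V σ x)) -
      ∫ σ in s..t, sInt (μ s) fun x => fderiv ℝ φ x (V σ x)| ≤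
      (2 * M * L * ρ δ + M * (3 * B + 2 * L * mollConst d / δ) * H) * H := by
    rw [← intervalIntegral.integral_sub hti hsi]
    nth_rw 2 [hHdef]
    rw [← intervalIntegral.integral_const_mul]
    refine intervalIntegral.norm_integral_le_of_norm_le (E := ℝ) hst ?_ (hAi.const_mul _)
    filter_upwards [h.ae_bound hs ht] with σ hσ hm
    have hA := h.nonneg σ
    have hsσ : ∫ r in s..σ, A r ≤ H := intervalIntegral.integral_mono_interval le_rfl hm.1.le hm.2
      (Eventually.of_forall h.nonneg) hAi
    refine (abs_sInt_fderiv_apply_sub_le h hμ hM hφ hδ hδ1 hm.1.le hs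
      ⟨hs.1.trans hm.1.le, hm.2.trans ht.2⟩ (hσ hm)).trans ?_
    gcongr
  have e2 := abs_sInt_sub_le (hM s) (hint _ hUc) (hint _ hWs.continuous) (c := L * (ρ δ * H))
    fun x => by
      rw [← map_sub]
      refine ((fderiv ℝ φ x).le_opNorm _).trans
        (mul_le_mul (hφ.norm_fderiv_le x) ?_ (norm_nonneg _) hL)
      rw [norm_sub_rev]
      exact norm_mollify_sub_le hδ hUc fun y hy => h.norm_drift_sub_le hst hs ht hδ1 hy
  have hWn : ∀ x, ‖W x‖ ≤ 3 * H := norm_mollify_le hδ hUc (h.norm_drift_le hst hs ht)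
  obtain ⟨b, hb0, hb⟩ := exists_norm_fderiv_mollify_sub_le 𝔼 𝔼 hδ
  have hφ' := hφ.comp_add hWs hWn
    (fun x => norm_fderiv_mollify_le hδ hUc fun y hy => h.norm_drift_sub_le hst hs ht hδ1 hy)
    (hb _ hUc H (h.norm_drift_le hst hs ht)) (by positivity)
  have hφi' : Integrable (fun x => φ (x + W x)) (μ s).totalVariation :=
    integrable_totalVariation_of_hasCompactSupport _ hφ'.contDiff.continuous hφ'.hasCompactSupport
  have e3 := abs_sInt_sub_le (hM s) (hφi'.sub hφi) (hint _ hWs.continuous)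
    (c := B * (3 * H) ^ 2) fun x => hφ.abs_add_sub_sub_le (hWn x)
  have e4 : sInt (μ s) ((fun x => φ (x + W x)) - φ) =
      sInt (μ s) (fun x => φ (x + W x)) - sInt (μ s) φ := sInt_sub _ hφi' hφi
  have e5 := hμ φ hφ.contDiff hφ.hasCompactSupport s hs t ht
  rw [hsI] at e1
  rw [e4] at e3
  rw [abs_le] at e1 e2 e3 ⊢
  have e6 : M * (3 * L * ρ δ * H + (12 * B + 2 * L * mollConst d / δ) * H ^ 2) =
      (2 * M * L * ρ δ + M * (3 * B + 2 * L * mollConst d / δ) * H) * H +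
      M * (L * (ρ δ * H)) + M * (B * (3 * H) ^ 2) := by ring
  rw [e6]
  constructor <;> linarith

end OneStep

section Chain

/-- Every family of functionals which follows `V` sees `ψ` at time `s` as it sees `φ` at time `t`,
up to the error `e`. -/
def Pullback {d : ℕ} (T : ℝ) (V : ℝ → EuclideanSpace ℝ (Fin d) → EuclideanSpace ℝ (Fin d))
    (A ρ : ℝ → ℝ) (s t : ℝ) (φ ψ : EuclideanSpace ℝ (Fin d) → ℝ) (e : ℝ) : Prop :=
  ∀ M : ℝ, 0 ≤ M → ∀ ℓ, Follows T V A ρ M ℓ → |ℓ t φ - ℓ s ψ| ≤ M * e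

variable {d : ℕ}

local notation "𝔼" => EuclideanSpace ℝ (Fin d)

variable {T : ℝ} {V : ℝ → EuclideanSpace ℝ (Fin d) → EuclideanSpace ℝ (Fin d)} {A ρ : ℝ → ℝ}
  {r s t δ : ℝ} {φ ψ χ : EuclideanSpace ℝ (Fin d) → ℝ}

theorem Pullback.mono {e e' : ℝ} (h : Pullback T V A ρ s t φ ψ e) (he : e ≤ e') :
    Pullback T V A ρ s t φ ψ e' :=
  fun M hM ℓ hℓ => (h M hM ℓ hℓ).trans (by gcongr)

theorem Pullback.trans {e e' : ℝ} (h : Pullback T V A ρ r t φ ψ e)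
    (h' : Pullback T V A ρ s r ψ χ e') : Pullback T V A ρ s t φ χ (e + e') := by
  intro M hM ℓ hℓ
  have h1 := abs_sub_le (ℓ t φ) (ℓ r ψ) (ℓ s χ)
  have h2 := h M hM ℓ hℓ
  have h3 := h' M hM ℓ hℓ
  linarith

theorem OsgoodBound.exists_split (h : OsgoodBound T V A ρ) (hst : s ≤ t) (hs : s ∈ Icc 0 T)
    (ht : t ∈ Icc 0 T) {η : ℝ} (hη : 0 ≤ η) :
    ∃ r ∈ Icc s t, (∫ σ in r..t, A σ) ≤ η ∧
      (∫ σ in s..r, A σ) ≤ max ((∫ σ in s..t, A σ) - η) 0 := by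
  have hi := h.intervalIntegrable hs ht
  have hc := intervalIntegral.continuousOn_primitive_interval' hi left_mem_uIcc
  rw [uIcc_of_le hst] at hc
  have hH := h.integral_nonneg hst
  obtain ⟨r, hr, hrv⟩ := intermediate_value_Icc hst hc
    (show max ((∫ σ in s..t, A σ) - η) 0 ∈ Icc (∫ σ in s..s, A σ) (∫ σ in s..t, A σ) by
      rw [intervalIntegral.integral_same]
      exact ⟨le_max_right _ _, max_le (by linarith) hH⟩)
  have hrT : r ∈ Icc 0 T := ⟨hs.1.trans hr.1, hr.2.trans ht.2⟩
  have hadd := intervalIntegral.integral_add_adjacent_intervals (h.intervalIntegrable hs hrT)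
    (h.intervalIntegrable hrT ht)
  simp only at hrv
  refine ⟨r, hr, ?_, hrv.le⟩
  have := le_max_left ((∫ σ in s..t, A σ) - η) 0
  linarith

theorem OsgoodBound.exists_pullback_step (h : OsgoodBound T V A ρ) (hδ : 0 < δ) (hδ1 : δ < 1) :
    ∃ b : ℝ, 0 ≤ b ∧ ∀ ⦃s t : ℝ⦄, s ≤ t → s ∈ Icc 0 T → t ∈ Icc 0 T → ∀ ⦃η : ℝ⦄, η ≤ δ →
      (∫ σ in s..t, A σ) ≤ η → ∀ ⦃φ : 𝔼 → ℝ⦄ ⦃L B : ℝ⦄, TestBound φ L B →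
      ∃ ψ, TestBound ψ (L * (1 + mollConst d * ρ δ / δ * η))
          (B * (1 + mollConst d * ρ δ / δ * η) ^ 2 + L * (b * η)) ∧
        Pullback T V A ρ s t φ ψ
          (3 * L * ρ δ * η + (12 * B + 2 * L * mollConst d / δ) * η ^ 2) := by
  obtain ⟨b, hb0, hb⟩ := exists_norm_fderiv_mollify_sub_le 𝔼 𝔼 hδ
  refine ⟨b, hb0, fun s t hst hs ht η hηδ hH φ L B hφ => ?_⟩
  have hκ := mollConst_pos d
  have hρ := h.modulus_nonneg δ
  have hL := hφ.fst_nonneg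
  have hB := hφ.snd_nonneg
  have hH0 := h.integral_nonneg hst
  have hη := hH0.trans hH
  have hUc := h.continuous_drift hst hs ht
  have hUn : ∀ x, ‖drift V s t x‖ ≤ η := fun x => (h.norm_drift_le hst hs ht x).trans hH
  refine ⟨_, hφ.comp_add (contDiff_mollify δ hUc) (norm_mollify_le hδ hUc hUn) (fun x => ?_)
    (hb _ hUc η hUn) (by positivity), fun M hM ℓ hℓ => ?_⟩
  · refine (norm_fderiv_mollify_le hδ hUc (x := x) (w := ρ δ * η) fun y hy =>
      (h.norm_drift_sub_le hst hs ht hδ1 hy).trans (by gcongr)).trans (le_of_eq (by ring))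
  · refine (hℓ hδ hδ1 hs ht hst (hH.trans hηδ) hφ).trans ?_
    gcongr

theorem OsgoodBound.exists_pullback_iterate (h : OsgoodBound T V A ρ) (hδ : 0 < δ) (hδ1 : δ < 1) :
    ∃ b : ℝ, 0 ≤ b ∧ ∀ ⦃η : ℝ⦄, 0 ≤ η → η ≤ δ → ∀ (n : ℕ) ⦃s t : ℝ⦄, s ≤ t → s ∈ Icc 0 T →
      t ∈ Icc 0 T → (∫ σ in s..t, A σ) ≤ n * η → ∀ ⦃φ : 𝔼 → ℝ⦄ ⦃L B : ℝ⦄, TestBound φ L B →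
      ∃ ψ, TestBound ψ (L * Real.exp (mollConst d * ρ δ / δ * (n * η)))
          ((B + L * b * (n * η)) * Real.exp (mollConst d * ρ δ / δ * (n * η)) ^ 2) ∧
        Pullback T V A ρ s t φ ψ
          (n * (3 * (L * Real.exp (mollConst d * ρ δ / δ * (n * η))) * ρ δ * η +
            (12 * ((B + L * b * (n * η)) * Real.exp (mollConst d * ρ δ / δ * (n * η)) ^ 2) +
              2 * (L * Real.exp (mollConst d * ρ δ / δ * (n * η))) * mollConst d / δ)
                * η ^ 2)) := by
  obtain ⟨b, hb0, hb⟩ := h.exists_pullback_step hδ hδ1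
  refine ⟨b, hb0, fun η hη0 hηδ n => ?_⟩
  have hκ := mollConst_pos d
  have hρ := h.modulus_nonneg δ
  set a := mollConst d * ρ δ / δ with ha
  have ha0 : 0 ≤ a := by positivity
  induction n with
  | zero =>
    intro s t hst hs ht hH φ L B hφ
    obtain ⟨ψ, hψ, hp⟩ := hb hst hs ht hδ.le (η := 0) (by simpa using hH) hφ
    exact ⟨ψ, by simpa using hψ, by simpa using hp⟩
  | succ n ih =>
    intro s t hst hs ht hH φ L B hφ
    have hL := hφ.fst_nonneg
    have hB := hφ.snd_nonneg
    obtain ⟨r, hr, hrt, hsr⟩ := h.exists_split hst hs ht hη0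
    have hrT : r ∈ Icc 0 T := ⟨hs.1.trans hr.1, hr.2.trans ht.2⟩
    obtain ⟨φ', hφ', hp'⟩ := hb hr.2 hrT ht hηδ hrt hφ
    obtain ⟨ψ, hψ, hp⟩ := ih hr.1 hs hrT
      (hsr.trans (max_le (by push_cast at hH; linarith) (by positivity))) hφ'
    have hexp : Real.exp (a * ((n + 1 : ℕ) * η)) = Real.exp (a * (n * η)) * Real.exp (a * η) := by
      rw [← Real.exp_add]
      push_cast
      ring_nf
    have h1 : 1 + a * η ≤ Real.exp (a * η) := by
      have := Real.add_one_le_exp (a * η)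
      linarith
    have haη : 0 ≤ a * η := by positivity
    set x := Real.exp (a * η) with hx
    set y := Real.exp (a * (n * η)) with hy
    have hy1 : 1 ≤ y := Real.one_le_exp (by positivity)
    have hx1 : 1 ≤ x := Real.one_le_exp haη
    have hLle : L * (1 + a * η) * y ≤ L * (y * x) := by
      calc L * (1 + a * η) * y ≤ L * x * y := by gcongr
        _ = _ := by ring
    have hBle : (B * (1 + a * η) ^ 2 + L * (b * η) + L * (1 + a * η) * b * (n * η)) * y ^ 2 ≤
        (B + L * b * ((n + 1 : ℕ) * η)) * (y * x) ^ 2 := by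
      have h2 : 1 + a * η ≤ x ^ 2 := h1.trans (le_self_pow₀ hx1 (by norm_num))
      have h3 : (1 : ℝ) ≤ x ^ 2 := one_le_pow₀ hx1
      calc _ ≤ (B * x ^ 2 + L * (b * η) * x ^ 2 + L * x ^ 2 * b * (n * η)) * y ^ 2 := by
            have h4 : L * (b * η) ≤ L * (b * η) * x ^ 2 :=
              le_mul_of_one_le_right (by positivity) h3
            gcongr
        _ = _ := by push_cast; ring
    rw [hexp]
    refine ⟨ψ, hψ.mono hLle hBle, (hp'.trans hp).mono ?_⟩
    have hLle0 : L ≤ L * (y * x) :=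
      le_mul_of_one_le_right hL (one_le_mul_of_one_le_of_one_le hy1 hx1)
    have hBle0 : B ≤ (B + L * b * ((n + 1 : ℕ) * η)) * (y * x) ^ 2 := by
      refine le_trans ?_ (le_mul_of_one_le_right (by positivity)
        (one_le_pow₀ (one_le_mul_of_one_le_of_one_le hy1 hx1)))
      have : 0 ≤ L * b * ((n + 1 : ℕ) * η) := by positivity
      linarith
    have key : ∀ L₁ B₁ : ℝ, L₁ ≤ L * (y * x) →
        B₁ ≤ (B + L * b * ((n + 1 : ℕ) * η)) * (y * x) ^ 2 →
        3 * L₁ * ρ δ * η + (12 * B₁ + 2 * L₁ * mollConst d / δ) * η ^ 2 ≤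
        3 * (L * (y * x)) * ρ δ * η +
          (12 * ((B + L * b * ((n + 1 : ℕ) * η)) * (y * x) ^ 2) +
            2 * (L * (y * x)) * mollConst d / δ) * η ^ 2 := by
      intro L₁ B₁ hL₁ hB₁
      gcongr
    have k1 := key _ _ hLle0 hBle0
    have k2 := mul_le_mul_of_nonneg_left (key _ _ hLle hBle) n.cast_nonneg
    rw [Nat.cast_succ, add_mul, one_mul] at *
    linarith

theorem OsgoodBound.exists_pullback_stage (h : OsgoodBound T V A ρ) (hδ : 0 < δ) (hδ1 : δ < 1)
    (hst : s ≤ t) (hs : s ∈ Icc 0 T) (ht : t ∈ Icc 0 T) {H : ℝ} (hH : (∫ σ in s..t, A σ) ≤ H)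
    {L B : ℝ} (hφ : TestBound φ L B) {ε : ℝ} (hε : 0 < ε) :
    ∃ ψ B', TestBound ψ (L * Real.exp (mollConst d * ρ δ / δ * H)) B' ∧
      Pullback T V A ρ s t φ ψ
        (3 * (L * Real.exp (mollConst d * ρ δ / δ * H)) * ρ δ * H + ε) := by
  obtain ⟨b, -, hb⟩ := h.exists_pullback_iterate hδ hδ1
  have hH0 := (h.integral_nonneg hst).trans hH
  set x := Real.exp (mollConst d * ρ δ / δ * H) with hx
  set Q := (12 * ((B + L * b * H) * x ^ 2) + 2 * (L * x) * mollConst d / δ) * H ^ 2 with hQ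
  obtain ⟨N, hN0, hN⟩ : ∃ N : ℕ, 0 < N ∧ H / δ + Q / ε ≤ N ∧ H / δ ≤ N := by
    obtain ⟨N, hN⟩ := exists_nat_gt (max (max (H / δ + Q / ε) (H / δ)) 0)
    simp only [max_lt_iff] at hN
    exact ⟨N, by exact_mod_cast hN.2, hN.1.1.le, hN.1.2.le⟩
  have hN0' : (0 : ℝ) < N := by exact_mod_cast hN0
  have hNH : (N : ℝ) * (H / N) = H := by field_simp
  obtain ⟨ψ, hψ, hp⟩ := hb (η := H / N) (by positivity)
    (by rw [div_le_iff₀ hN0', mul_comm, ← div_le_iff₀ hδ]; exact hN.2) N hst hs ht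
    (by rwa [hNH]) hφ
  rw [hNH] at hψ hp
  refine ⟨ψ, _, hψ, hp.mono ?_⟩
  have h1 : (N : ℝ) * (3 * (L * x) * ρ δ * (H / N) +
      (12 * ((B + L * b * H) * x ^ 2) + 2 * (L * x) * mollConst d / δ) * (H / N) ^ 2) =
      3 * (L * x) * ρ δ * H + Q / N := by
    rw [hQ]
    field_simp
  rw [h1]
  gcongr
  rw [div_le_iff₀ hN0', mul_comm, ← div_le_iff₀ hε]
  have : 0 ≤ H / δ := by positivity
  linarith [hN.1]

end Chain

section Osgood

theorem not_summable_of_lintegral_eq_top {ρ : ℝ → ℝ} (hmono : MonotoneOn ρ (Ico 0 1))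
    (hpos : ∀ k : ℕ, 1 ≤ k → 0 < ρ ((1 / 2) ^ k))
    (htop : (∫⁻ s in Ioo (0 : ℝ) 1, ENNReal.ofReal (1 / ρ s)) = ⊤) {K : ℕ} (hK : 1 ≤ K) :
    ¬ Summable fun j : ℕ => (1 / 2 : ℝ) ^ (K + j) / ρ ((1 / 2) ^ (K + j)) := by
  intro hsum
  have hle : ∀ a b : ℝ, 0 < a → 0 < ρ a → b ≤ 1 →
      (∫⁻ s in Ico a b, ENNReal.ofReal (1 / ρ s)) ≤ ENNReal.ofReal ((b - a) / ρ a) := by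
    intro a b ha hρ hb
    refine (setLIntegral_mono (g := fun _ => ENNReal.ofReal (1 / ρ a)) measurable_const
      fun x hx => ENNReal.ofReal_le_ofReal ?_).trans (le_of_eq ?_)
    · exact one_div_le_one_div_of_le hρ (hmono ⟨ha.le, (hx.1.trans_lt hx.2).trans_le hb⟩
        ⟨ha.le.trans hx.1, hx.2.trans_le hb⟩ hx.1)
    · rw [setLIntegral_const, Real.volume_Ico, ← ENNReal.ofReal_mul (by positivity)]
      ring_nf
  have hcover : Ioo (0 : ℝ) 1 ⊆ Ico ((1 / 2) ^ K) 1 ∪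
      ⋃ j : ℕ, Ico ((1 / 2) ^ (K + (j + 1))) ((1 / 2) ^ (K + j)) := by
    intro x hx
    obtain ⟨n, hn⟩ : ∃ n : ℕ, (1 / 2 : ℝ) ^ (K + n) ≤ x := by
      obtain ⟨n, hn⟩ := exists_pow_lt_of_lt_one hx.1 (by norm_num : (1 / 2 : ℝ) < 1)
      exact ⟨n, (pow_le_pow_of_le_one (by norm_num) (by norm_num) (by omega)).trans hn.le⟩
    induction n with
    | zero => exact Or.inl ⟨hn, hx.2⟩
    | succ n ih =>
      rcases le_or_gt ((1 / 2 : ℝ) ^ (K + n)) x with hxn | hxn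
      · exact ih hxn
      · exact Or.inr (mem_iUnion.2 ⟨n, hn, hxn⟩)
  have hfin : (∫⁻ s in Ioo (0 : ℝ) 1, ENNReal.ofReal (1 / ρ s)) < ⊤ := by
    refine (lintegral_mono_set hcover).trans_lt ((lintegral_union_le _ _ _).trans_lt
      (ENNReal.add_lt_top.2 ⟨?_, ?_⟩))
    · exact (hle _ 1 (by positivity) (hpos K hK) le_rfl).trans_lt ENNReal.ofReal_lt_top
    · refine (lintegral_iUnion_le _ _).trans_lt ?_
      have hs1 : Summable fun j : ℕ => (1 / 2 : ℝ) ^ (K + (j + 1)) / ρ ((1 / 2) ^ (K + (j + 1))) :=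
        (summable_nat_add_iff 1).2 hsum
      refine (ENNReal.tsum_le_tsum fun j => ?_).trans_lt
        (lt_top_iff_ne_top.2 hs1.tsum_ofReal_ne_top)
      refine (hle _ _ (by positivity) (hpos _ (by omega))
        (pow_le_one₀ (by norm_num) (by norm_num))).trans (le_of_eq ?_)
      congr 2
      rw [← add_assoc, pow_succ]
      ring
  exact hfin.ne htop

end Osgood

section Chain
variable {d : ℕ}

local notation "𝔼" => EuclideanSpace ℝ (Fin d)

variable {T : ℝ} {V : ℝ → EuclideanSpace ℝ (Fin d) → EuclideanSpace ℝ (Fin d)} {A ρ : ℝ → ℝ}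
  {s t : ℝ} {φ : EuclideanSpace ℝ (Fin d) → ℝ}

theorem half_pow_lt_one {k : ℕ} (hk : 1 ≤ k) : (1 / 2 : ℝ) ^ k < 1 :=
  pow_lt_one₀ (by norm_num) (by norm_num) (by omega)

theorem exp_half_lt_two : Real.exp (1 / 2) < 2 := by
  have h1 := Real.exp_one_lt_d9
  have h2 : Real.exp (1 / 2) ^ 2 = Real.exp 1 := by
    rw [← Real.exp_nat_mul]
    norm_num
  nlinarith [Real.exp_pos (1 / 2)]

theorem OsgoodBound.exists_pullback_multiscale (h : OsgoodBound T V A ρ)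
    (hpos : ∀ k : ℕ, 1 ≤ k → 0 < ρ ((1 / 2) ^ k)) : ∃ c : ℝ, 0 ≤ c ∧ ∀ (n : ℕ) ⦃K : ℕ⦄, 1 ≤ K →
      ∀ ⦃s t : ℝ⦄, s ≤ t → s ∈ Icc 0 T → t ∈ Icc 0 T →
      (∫ σ in s..t, A σ) ≤ ∑ j ∈ Finset.range n,
        1 / (2 * mollConst d) * ((1 / 2) ^ (K + j) / ρ ((1 / 2) ^ (K + j))) →
      ∀ ⦃φ : 𝔼 → ℝ⦄ ⦃L B : ℝ⦄, TestBound φ L B → ∀ ⦃ε : ℝ⦄, 0 < ε →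
      ∃ ψ L' B', TestBound ψ L' B' ∧ Pullback T V A ρ s t φ ψ (c * L * (1 / 2) ^ K + ε) := by
  have hκ := mollConst_pos d
  set κ := mollConst d with hκdef
  set q := Real.exp (1 / 2) with hq
  have hq2 : q < 2 := exp_half_lt_two
  have hq0 : 0 < q := Real.exp_pos _
  obtain ⟨c, hc0, hc⟩ : ∃ c : ℝ, 0 ≤ c ∧ 3 * q / (2 * κ) + c * q / 2 = c := by
    have h2q : 0 < 2 - q := by linarith
    refine ⟨3 * q / κ / (2 - q), by positivity, ?_⟩
    field_simp
    ring
  refine ⟨c, hc0, fun n => ?_⟩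
  induction n with
  | zero =>
    intro K hK s t hst hs ht hH φ L B hφ ε hε
    have hL := hφ.fst_nonneg
    obtain ⟨ψ, B', hψ, hp⟩ := h.exists_pullback_stage (by positivity) (half_pow_lt_one hK) hst hs
      ht (by simpa using hH) hφ hε
    exact ⟨ψ, _, B', hψ, hp.mono (by
      have : 0 ≤ c * L * (1 / 2) ^ K := by positivity
      linarith)⟩
  | succ n ih =>
    intro K hK s t hst hs ht hH φ L B hφ ε hε
    have hL := hφ.fst_nonneg
    have hρ := hpos K hK
    set δ : ℝ := (1 / 2) ^ K with hδ
    have hδ0 : 0 < δ := by positivity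
    set τ : ℝ := 1 / (2 * κ) * (δ / ρ δ) with hτ
    have hτ0 : 0 ≤ τ := by positivity
    obtain ⟨r, hr, hrt, hsr⟩ := h.exists_split hst hs ht hτ0
    have hrT : r ∈ Icc 0 T := ⟨hs.1.trans hr.1, hr.2.trans ht.2⟩
    obtain ⟨φ', B', hφ', hp'⟩ := h.exists_pullback_stage hδ0 (half_pow_lt_one hK) hr.2 hrT ht hrt
      hφ (half_pos hε)
    have he : κ * ρ δ / δ * τ = 1 / 2 := by
      rw [hτ]
      field_simp
    rw [← hκdef, he] at hφ' hp'
    rw [Finset.sum_range_succ'] at hH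
    have hsum : (∫ σ in s..r, A σ) ≤ ∑ j ∈ Finset.range n,
        1 / (2 * κ) * ((1 / 2) ^ (K + 1 + j) / ρ ((1 / 2) ^ (K + 1 + j))) := by
      have hidx : ∀ j, K + 1 + j = K + (j + 1) := fun j => by ring
      simp only [hidx]
      refine hsr.trans (max_le ?_ (Finset.sum_nonneg fun j _ => ?_))
      · simp only [add_zero] at hH
        linarith
      · have := hpos (K + (j + 1)) (by omega)
        positivity
    obtain ⟨ψ, L₁, B₁, hψ, hp⟩ := ih (by omega : 1 ≤ K + 1) hr.1 hs hrT hsum hφ' (half_pos hε)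
    refine ⟨ψ, L₁, B₁, hψ, (hp'.trans hp).mono (le_of_eq ?_)⟩
    have h1 : 3 * (L * q) * ρ δ * τ = 3 * q / (2 * κ) * (L * δ) := by
      rw [hτ]
      field_simp
    rw [h1, pow_succ, ← hδ]
    linear_combination L * δ * hc

theorem OsgoodBound.exists_pullback (h : OsgoodBound T V A ρ)
    (htop : (∫⁻ s in Ioo (0 : ℝ) 1, ENNReal.ofReal (1 / ρ s)) = ⊤) (hst : s ≤ t)
    (hs : s ∈ Icc 0 T) (ht : t ∈ Icc 0 T) (hφ : ContDiff ℝ ∞ φ) (hφc : HasCompactSupport φ)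
    {ε : ℝ} (hε : 0 < ε) :
    ∃ ψ L B, TestBound ψ L B ∧ Pullback T V A ρ s t φ ψ ε := by
  obtain ⟨L, B, hφ⟩ := exists_testBound hφ hφc
  have hκ := mollConst_pos d
  by_cases hpos : ∀ k : ℕ, 1 ≤ k → 0 < ρ ((1 / 2) ^ k)
  · obtain ⟨c, hc0, hc⟩ := h.exists_pullback_multiscale hpos
    have hlim : Tendsto (fun k : ℕ => c * L * (1 / 2 : ℝ) ^ k) atTop (𝓝 (c * L * 0)) :=
      (tendsto_pow_atTop_nhds_zero_of_lt_one (by norm_num) (by norm_num)).const_mul _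
    rw [mul_zero] at hlim
    obtain ⟨K, hK, hK1⟩ :=
      ((hlim.eventually (gt_mem_nhds (half_pos hε))).and (eventually_ge_atTop 1)).exists
    have hdiv := (not_summable_iff_tendsto_nat_atTop_of_nonneg fun j => by
      have := hpos (K + j) (by omega)
      positivity).1 (not_summable_of_lintegral_eq_top h.mono hpos htop hK1)
    obtain ⟨n, hn⟩ := ((hdiv.const_mul_atTop (r := 1 / (2 * mollConst d))
      (by positivity)).eventually (eventually_ge_atTop (∫ σ in s..t, A σ))).exists
    rw [Finset.mul_sum] at hn
    obtain ⟨ψ, L', B', hψ, hp⟩ := hc n hK1 hst hs ht hn hφ (half_pos hε)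
    exact ⟨ψ, L', B', hψ, hp.mono (by linarith)⟩
  · push Not at hpos
    obtain ⟨k, hk, hρ⟩ := hpos
    have hρ0 : ρ ((1 / 2) ^ k) = 0 := le_antisymm hρ (h.modulus_nonneg _)
    obtain ⟨ψ, B', hψ, hp⟩ := h.exists_pullback_stage (by positivity) (half_pow_lt_one hk) hst hs
      ht le_rfl hφ hε
    exact ⟨ψ, _, B', hψ, hp.mono (by rw [hρ0]; simp)⟩

end Chain

section Transport

variable {d : ℕ}

local notation "𝔼" => EuclideanSpace ℝ (Fin d)

variable {T : ℝ} {V : ℝ → EuclideanSpace ℝ (Fin d) → EuclideanSpace ℝ (Fin d)} {A ρ : ℝ → ℝ}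

theorem measurable_iSup_enorm (hVm : Measurable (Function.uncurry V))
    (hVc : ∀ t, Continuous (V t)) : Measurable fun t => ⨆ x, (‖V t x‖₊ : ℝ≥0∞) := by
  have h : ∀ t, ⨆ x, (‖V t x‖₊ : ℝ≥0∞) =
      ⨆ n : ℕ, (‖V t (TopologicalSpace.denseSeq 𝔼 n)‖₊ : ℝ≥0∞) := by
    intro t
    have hc : Continuous fun x => (‖V t x‖₊ : ℝ≥0∞) := by
      have := hVc t
      fun_prop
    refine le_antisymm (iSup_le fun x => ?_) (iSup_le fun n => le_iSup (fun x =>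
      (‖V t x‖₊ : ℝ≥0∞)) _)
    exact (TopologicalSpace.denseRange_denseSeq 𝔼).induction_on
      (p := fun x => (‖V t x‖₊ : ℝ≥0∞) ≤
        ⨆ n : ℕ, (‖V t (TopologicalSpace.denseSeq 𝔼 n)‖₊ : ℝ≥0∞)) x
      (isClosed_le hc continuous_const)
      fun n => le_iSup (fun n => (‖V t (TopologicalSpace.denseSeq 𝔼 n)‖₊ : ℝ≥0∞)) n
  simp only [h]
  refine Measurable.iSup fun n => ?_
  exact (hVm.comp (measurable_id.prodMk measurable_const)).nnnorm.coe_nnreal_ennreal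

theorem exists_osgoodBound (hVm : Measurable (Function.uncurry V)) (hVc : ∀ t, Continuous (V t))
    (hbound : (∫⁻ t in Icc (0 : ℝ) T, ⨆ x, (‖V t x‖₊ : ℝ≥0∞)) < ⊤) {C : ℝ → ℝ}
    (hC0 : ∀ t, 0 ≤ C t) (hC : IntegrableOn C (Ioo 0 T)) (hmono : MonotoneOn ρ (Ico 0 1))
    (hρ : ∀ r, 0 ≤ ρ r)
    (hosc : ∀ (t : ℝ) (x y : 𝔼), ‖x - y‖ < 1 → ‖V t x - V t y‖ ≤ C t * ρ ‖x - y‖) :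
    ∃ A, OsgoodBound T V A ρ := by
  have hm := measurable_iSup_enorm hVm hVc
  refine ⟨fun t => C t + (⨆ x, (‖V t x‖₊ : ℝ≥0∞)).toReal, hVm, hVc,
    fun t => add_nonneg (hC0 t) ENNReal.toReal_nonneg, ?_, ?_, hmono, hρ, fun t x y hxy => ?_⟩
  · exact ((integrableOn_Icc_iff_integrableOn_Ioo).2 hC).add
      (integrable_toReal_of_lintegral_ne_top hm.aemeasurable hbound.ne)
  · filter_upwards [ae_lt_top hm hbound.ne] with t ht x
    have h1 : (‖V t x‖₊ : ℝ≥0∞) ≤ ⨆ x, (‖V t x‖₊ : ℝ≥0∞) :=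
      le_iSup (fun x => (‖V t x‖₊ : ℝ≥0∞)) x
    have h2 := ENNReal.toReal_mono ht.ne h1
    simp only [ENNReal.coe_toReal, coe_nnnorm] at h2
    linarith [hC0 t]
  · refine (hosc t x y hxy).trans (mul_le_mul_of_nonneg_right ?_ (hρ _))
    linarith [ENNReal.toReal_nonneg (a := ⨆ x, (‖V t x‖₊ : ℝ≥0∞))]

theorem IsFlow.apply_apply {hT : 0 ≤ T} {X : ℝ → ℝ → 𝔼 → 𝔼} (hX : IsFlow T hT V X) {s t : ℝ}
    (hs : s ∈ Icc 0 T) (ht : t ∈ Icc 0 T) (x : 𝔼) : X s t (X t s x) = x := by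
  obtain ⟨γ, hγ, hγt, hγX, -⟩ := hX t ht x
  obtain ⟨γ', -, -, hγX', huniq⟩ := hX s hs (X t s x)
  have h1 := huniq γ hγ (hγX ⟨s, hs⟩).symm
  rw [hγX' ⟨t, ht⟩, ← h1, hγt]

theorem eq_map_of_le {hT : 0 ≤ T} (h : OsgoodBound T V A ρ)
    (htop : (∫⁻ s in Ioo (0 : ℝ) 1, ENNReal.ofReal (1 / ρ s)) = ⊤) {X : ℝ → ℝ → 𝔼 → 𝔼}
    (hX : IsFlow T hT V X) {μ : ℝ → SignedMeasure 𝔼} (hμ : IsSignedSolution T V μ) {M : ℝ}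
    (hM : ∀ σ, (μ σ).totalVariation.real univ ≤ M) {s t : ℝ} (hs : s ∈ Icc 0 T)
    (ht : t ∈ Icc 0 T) (hst : s ≤ t) (hXm : Measurable (X s t)) : μ t = (μ s).map (X s t) := by
  have hM0 : 0 ≤ M := measureReal_nonneg.trans (hM 0)
  refine signedMeasure_eq_map_of_forall_sInt_eq hXm fun φ hφ hφc => ?_
  obtain ⟨m, hm⟩ := hφc.exists_bound_of_continuous hφ.continuous
  have hi : Integrable (fun x => φ (X s t x)) (μ s).totalVariation :=
    Integrable.of_bound (hφ.continuous.measurable.comp hXm).aestronglyMeasurable m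
      (Eventually.of_forall fun x => hm _)
  have key : ∀ ε : ℝ, 0 < ε →
      |sInt (μ t) φ - sInt (μ s) fun x => φ (X s t x)| ≤ M * ε + M * ε := by
    intro ε hε
    obtain ⟨ψ, L, B, hψ, hp⟩ := h.exists_pullback htop hst hs ht hφ hφc hε
    have h1 := hp M hM0 _ (follows_sInt hT h hμ hM)
    have h2 : ∀ x, |φ (X s t x) - ψ x| ≤ ε := by
      intro x
      obtain ⟨γ, hγ, hγs, hγX, -⟩ := hX s hs x
      have h3 := hp 1 zero_le_one _ (follows_of_isSolution h hγ)
      rwa [projIcc_of_mem hT hs, projIcc_of_mem hT ht, hγs, ← hγX ⟨t, ht⟩, one_mul] at h3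
    have h4 := abs_sInt_sub_le (hM s) hi (integrable_totalVariation_of_hasCompactSupport _
      hψ.contDiff.continuous hψ.hasCompactSupport) h2
    rw [abs_sub_comm] at h4
    exact (abs_sub_le _ (sInt (μ s) ψ) _).trans (add_le_add h1 h4)
  refine eq_of_abs_sub_le_all fun ε hε => (key (ε / (2 * (M + 1))) (by positivity)).trans ?_
  have h5 : M * (ε / (2 * (M + 1))) + M * (ε / (2 * (M + 1))) = ε * (M / (M + 1)) := by
    field_simp
    ring
  rw [h5]
  exact mul_le_of_le_one_right hε.le ((div_le_one (by positivity)).2 (by linarith))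

end Transport

end Helpers

/-- if `V ∈ 𝒞` satisfies the Osgood condition and `X` is the
associated flow solving the ODE, then every norm-bounded signed-measure
solution `(μ_t)` of the continuity equation satisfies
`μ_t = (X_s^t)_♯ μ_s` for all `s, t ∈ [0,T]`. -/
theorem stmt19 (d : ℕ) (T : ℝ) (hT : 0 ≤ T)
    (V : ℝ → EuclideanSpace ℝ (Fin d) → EuclideanSpace ℝ (Fin d))
    (hVmeas : Measurable (Function.uncurry V))
    (hVcont : ∀ t, Continuous (V t))
    (hbound : (∫⁻ t in Set.Icc (0:ℝ) T, ⨆ x, (‖V t x‖₊ : ℝ≥0∞)) < ⊤)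
    (C : ℝ → ℝ) (hC0 : ∀ t, 0 ≤ C t)
    (hCint : IntegrableOn C (Set.Ioo (0:ℝ) T))
    (ρ : ℝ → ℝ)
    (hρ_cont : ContinuousOn ρ (Set.Ico (0:ℝ) 1))
    (hρ_mono : MonotoneOn ρ (Set.Ico (0:ℝ) 1))
    (hρ0 : ρ 0 = 0) (hρ_nonneg : ∀ s, 0 ≤ ρ s)
    (hOsgood : (∫⁻ s in Set.Ioo (0:ℝ) 1, ENNReal.ofReal (1 / ρ s)) = ⊤)
    (hOsg : ∀ (t : ℝ) (x y : EuclideanSpace ℝ (Fin d)), ‖x - y‖ < 1 →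
      ‖V t x - V t y‖ ≤ C t * ρ ‖x - y‖)
    (X : ℝ → ℝ → EuclideanSpace ℝ (Fin d) → EuclideanSpace ℝ (Fin d))
    (hX : IsFlow T hT V X)
    (hXmeas : ∀ s t : ℝ, Measurable (X s t))
    (μ : ℝ → MeasureTheory.SignedMeasure (EuclideanSpace ℝ (Fin d)))
    (hμsol : IsSignedSolution T V μ)
    (hμbdd : ∃ M : ℝ≥0∞, M < ⊤ ∧ ∀ t, (μ t).totalVariation Set.univ ≤ M) :
    ∀ s ∈ Set.Icc (0:ℝ) T, ∀ t ∈ Set.Icc (0:ℝ) T,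
      μ t = (μ s).map (X s t) := by
  obtain ⟨A, h⟩ := exists_osgoodBound hVmeas hVcont hbound hC0 hCint hρ_mono hρ_nonneg hOsg
  obtain ⟨M, hM, hμM⟩ := hμbdd
  have hμM' : ∀ σ, (μ σ).totalVariation.real univ ≤ M.toReal := fun σ =>
    ENNReal.toReal_mono hM.ne (hμM σ)
  intro s hs t ht
  rcases le_total s t with hst | hst
  · exact eq_map_of_le h hOsgood hX hμsol hμM' hs ht hst (hXmeas s t)
  · have h1 := eq_map_of_le h hOsgood hX hμsol hμM' ht hs hst (hXmeas t s)
    ext E hE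
    rw [VectorMeasure.map_apply _ (hXmeas s t) hE, h1,
      VectorMeasure.map_apply _ (hXmeas t s) (hXmeas s t hE), ← preimage_comp]
    congr 1
    ext x
    simp [hX.apply_apply hs ht]
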